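/- arXiv:0712.1514 — 3 statements merged into one kernel-verified Lean document; each statement's English description precedes it below -/
import Mathlib

section
/- Assume (H1) and (H2). For every ε ∈ (0,1) there exists C_ε > 0 such that for all f ∈ C₀^∞(ℍ; ℂ): ∫_ℍ b |f|² dv ≤ (1 + ε/2) q_A(f) + C_ε ‖f‖²_{L²(ℍ,dv)}. -/
open MeasureTheory Real Filter

noncomputable section

/-- The upper half-plane ℍ as a subset of ℝ². -/
def UHP : Set (ℝ × ℝ) := {p : ℝ × ℝ | 0 < p.2}

/-- The hyperbolic measure `dv = y⁻² dx dy` on ℍ. -/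
def volH : Measure (ℝ × ℝ) :=
  (volume.restrict UHP).withDensity fun p => ENNReal.ofReal ((p.2 ^ 2)⁻¹)

/-- x-derivative of a complex function on ℝ². -/
def dX (f : ℝ × ℝ → ℂ) (p : ℝ × ℝ) : ℂ := fderiv ℝ f p (1, 0)

/-- y-derivative of a complex function on ℝ². -/
def dY (f : ℝ × ℝ → ℂ) (p : ℝ × ℝ) : ℂ := fderiv ℝ f p (0, 1)

/-- x-derivative of a real function on ℝ². -/
def dXr (f : ℝ × ℝ → ℝ) (p : ℝ × ℝ) : ℝ := fderiv ℝ f p (1, 0)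

/-- y-derivative of a real function on ℝ². -/
def dYr (f : ℝ × ℝ → ℝ) (p : ℝ × ℝ) : ℝ := fderiv ℝ f p (0, 1)

/-- The magnetic field `b̃ = y² (∂ₓA₂ - ∂_yA₁)`. -/
def fieldB (A₁ A₂ : ℝ × ℝ → ℝ) (p : ℝ × ℝ) : ℝ := p.2 ^ 2 * (dXr A₂ p - dYr A₁ p)

/-- The magnetic intensity `b = |b̃|`. -/
def intenB (A₁ A₂ : ℝ × ℝ → ℝ) (p : ℝ × ℝ) : ℝ := |fieldB A₁ A₂ p|

/-- Smooth compactly supported test functions with support inside a set `Ω`. -/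
def IsTestOn (Ω : Set (ℝ × ℝ)) (f : ℝ × ℝ → ℂ) : Prop :=
  ContDiff ℝ (⊤ : ℕ∞) f ∧ HasCompactSupport f ∧ tsupport f ⊆ Ω

/-- The quadratic form of the magnetic Laplacian on ℍ. -/
def qA (A₁ A₂ : ℝ × ℝ → ℝ) (f : ℝ × ℝ → ℂ) : ℝ :=
  ∫ p, p.2 ^ 2 * (‖-Complex.I * dX f p - (A₁ p : ℂ) * f p‖ ^ 2 +
    ‖-Complex.I * dY f p - (A₂ p : ℂ) * f p‖ ^ 2) ∂volH

/-- hyperbolic distance from `(x,y)` to `(0,1)`. -/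
def hDist (p : ℝ × ℝ) : ℝ :=
  2 * Real.arsinh (Real.sqrt (p.1 ^ 2 + (p.2 - 1) ^ 2) / (2 * Real.sqrt p.2))

/-- (H1) : the magnetic intensity tends to +∞ at infinity. -/
def H1 (A₁ A₂ : ℝ × ℝ → ℝ) : Prop :=
  ∀ M : ℝ, ∃ R : ℝ, ∀ p ∈ UHP, R ≤ hDist p → M ≤ intenB A₁ A₂ p

/-- (H2) : control of the derivative of the magnetic field. -/
def H2 (C₀ : ℝ) (A₁ A₂ : ℝ × ℝ → ℝ) : Prop :=
  ∀ p ∈ UHP, p.2 * Real.sqrt ((dXr (fieldB A₁ A₂) p) ^ 2 + (dYr (fieldB A₁ A₂) p) ^ 2)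
    ≤ C₀ * (intenB A₁ A₂ p + 1)

/-- Counting function of a quadratic form `q` with form domain `dom` and squared
norm `nsq`, via Glazman's lemma. -/
def NN (q : (ℝ × ℝ → ℂ) → ℝ) (dom : Set (ℝ × ℝ → ℂ)) (nsq : (ℝ × ℝ → ℂ) → ℝ)
    (lam : ℝ) : ℕ :=
  sSup {n : ℕ | ∃ V : Submodule ℂ (ℝ × ℝ → ℂ), (V : Set (ℝ × ℝ → ℂ)) ⊆ dom ∧
    Module.finrank ℂ V = n ∧ ∀ u ∈ V, u ≠ 0 → q u < lam * nsq u}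

/-- Heaviside function `[ρ]₊⁰`. -/
def heav (ρ : ℝ) : ℝ := if 0 < ρ then 1 else 0


lemma isOpen_UHP' : IsOpen UHP := isOpen_lt continuous_const continuous_snd

/-- smoothed sign -/
def sg (t : ℝ) : ℝ := t / Real.sqrt (1 + t ^ 2)

lemma sqrt_one_le (t : ℝ) : 1 ≤ Real.sqrt (1 + t ^ 2) := by
  rw [Real.one_le_sqrt]; nlinarith [sq_nonneg t]

lemma sg_hasDeriv (t : ℝ) : HasDerivAt sg (1 / ((1 + t ^ 2) * Real.sqrt (1 + t ^ 2))) t := by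
  have h1 : 0 < 1 + t ^ 2 := by positivity
  have h2 := sqrt_one_le t
  have h3 : Real.sqrt (1 + t ^ 2) ^ 2 = 1 + t ^ 2 := Real.sq_sqrt h1.le
  have hq : HasDerivAt (fun t : ℝ => 1 + t ^ 2) (2 * t) t := by
    simpa using (hasDerivAt_pow 2 t).const_add 1
  have := (hasDerivAt_id t).div (hq.sqrt h1.ne') (by positivity)
  refine this.congr_deriv ?_
  simp only [id]
  rw [h3]
  generalize Real.sqrt (1 + t ^ 2) = r at *
  have : r ≠ 0 := by positivity
  field_simp
  nlinarith

lemma sg_contDiff : ContDiff ℝ 1 sg := by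
  unfold sg
  refine contDiff_id.div ?_ (fun t => by have := sqrt_one_le t; positivity)
  refine ContDiff.sqrt (by fun_prop) (fun t => by positivity)

lemma sg_abs_le (t : ℝ) : |sg t| ≤ 1 := by
  have h2 := sqrt_one_le t
  unfold sg
  rw [abs_div, abs_of_nonneg (Real.sqrt_nonneg _), div_le_one (by positivity)]
  apply Real.abs_le_sqrt; linarith

lemma sg_mul_ge (t : ℝ) : |t| - 1 ≤ sg t * t := by
  have h2 := sqrt_one_le t
  have h1 : 0 < 1 + t ^ 2 := by positivity
  have h3 : Real.sqrt (1 + t ^ 2) ^ 2 = 1 + t ^ 2 := Real.sq_sqrt h1.le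
  have h4 : |t| ≤ Real.sqrt (1 + t ^ 2) := by apply Real.abs_le_sqrt; linarith
  unfold sg
  have h5 := sq_abs t
  rw [div_mul_eq_mul_div, le_div_iff₀ (by positivity)]
  generalize Real.sqrt (1 + t ^ 2) = r at *
  have := abs_nonneg t
  nlinarith

lemma sg_deriv_bound (t : ℝ) :
    0 ≤ 1 / ((1 + t ^ 2) * Real.sqrt (1 + t ^ 2)) ∧
    1 / ((1 + t ^ 2) * Real.sqrt (1 + t ^ 2)) * (|t| + 1) ≤ 2 := by
  have h2 := sqrt_one_le t
  have h1 : 0 < 1 + t ^ 2 := by positivity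
  refine ⟨by positivity, ?_⟩
  rw [div_mul_eq_mul_div, div_le_iff₀ (by positivity)]
  have h5 := sq_abs t
  generalize Real.sqrt (1 + t ^ 2) = r at *
  nlinarith [sq_nonneg (|t| - 1), mul_le_mul_of_nonneg_left h2 h1.le]

/-- current -/
def curr (a c A : ℝ × ℝ → ℝ) (v : ℝ × ℝ) (p : ℝ × ℝ) : ℝ :=
  a p * fderiv ℝ c p v - c p * fderiv ℝ a p v - A p * (a p * a p + c p * c p)

lemma fderiv_sym {a : ℝ × ℝ → ℝ} (ha : ContDiff ℝ 2 a) (p v w : ℝ × ℝ) :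
    HasFDerivAt (fun q => fderiv ℝ a q v) ((fderiv ℝ (fderiv ℝ a) p).flip v) p ∧
    (fderiv ℝ (fderiv ℝ a) p v w = fderiv ℝ (fderiv ℝ a) p w v) := by
  constructor
  · have h : DifferentiableAt ℝ (fderiv ℝ a) p :=
      ((ha.fderiv_right (m := 1) (by norm_num)).differentiable (by norm_num)) p
    have := h.hasFDerivAt.clm_apply (hasFDerivAt_const v p)
    simpa using this
  · exact (ha.contDiffAt.isSymmSndFDerivAt (by simp)) v w

lemma fderiv_scurr {s a c A : ℝ × ℝ → ℝ} (ha : ContDiff ℝ 2 a) (hc : ContDiff ℝ 2 c)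
    (p v w : ℝ × ℝ) (hs : DifferentiableAt ℝ s p) (hA : DifferentiableAt ℝ A p) :
    fderiv ℝ (fun q => s q * curr a c A v q) p w =
      fderiv ℝ s p w * curr a c A v p + s p * (fderiv ℝ a p w * fderiv ℝ c p v
        + a p * fderiv ℝ (fderiv ℝ c) p w v - fderiv ℝ c p w * fderiv ℝ a p v
        - c p * fderiv ℝ (fderiv ℝ a) p w v - fderiv ℝ A p w * (a p * a p + c p * c p)
        - A p * (2 * a p * fderiv ℝ a p w + 2 * c p * fderiv ℝ c p w)) := by
  have ha1 := ((ha.differentiable (by norm_num)) p).hasFDerivAt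
  have hc1 := ((hc.differentiable (by norm_num)) p).hasFDerivAt
  have ha2 := (fderiv_sym ha p v w).1
  have hc2 := (fderiv_sym hc p v w).1
  have := (hs.hasFDerivAt.mul (((ha1.mul hc2).sub (hc1.mul ha2)).sub
    (hA.hasFDerivAt.mul ((ha1.mul ha1).add (hc1.mul hc1))))).fderiv
  have h2 : (fun q => s q * curr a c A v q) = (s * (((a * fun q => fderiv ℝ c q v) - 
     (c * fun q => fderiv ℝ a q v)) - A * (a * a + c * c))) := by
    ext q; simp [curr]
  rw [h2, this]
  simp [curr]
  ring

lemma pointwise_alg (ε C y s sx sy a c ax ay cx cy A1 A2 B b : ℝ) (hε : 0 < ε) (hy : 0 < y)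
    (hC : 0 < C) (hs : |s| ≤ 1) (hg : y ^ 2 * (sx ^ 2 + sy ^ 2) ≤ (2 * C) ^ 2)
    (hb : b - 1 ≤ s * (y ^ 2 * B)) :
    (y ^ 2)⁻¹ * (b * (a ^ 2 + c ^ 2)) ≤
      (1 + ε / 2) * ((cx - A1 * a) ^ 2 + (ax + A1 * c) ^ 2 +
        ((cy - A2 * a) ^ 2 + (ay + A2 * c) ^ 2)) +
      (1 + 4 * C ^ 2 / ε) * ((y ^ 2)⁻¹ * (a ^ 2 + c ^ 2))
      - (sx * (a * cy - c * ay - A2 * (a * a + c * c))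
        - sy * (a * cx - c * ax - A1 * (a * a + c * c))
        + s * (2 * (ax * cy - cx * ay) - B * (a * a + c * c)
          - A2 * (2 * a * ax + 2 * c * cx) + A1 * (2 * a * ay + 2 * c * cy))) := by
  obtain ⟨u1, hu1⟩ : ∃ u1, u1 = cx - A1 * a := ⟨_, rfl⟩
  obtain ⟨u2, hu2⟩ : ∃ u2, u2 = ax + A1 * c := ⟨_, rfl⟩
  obtain ⟨v1, hv1⟩ : ∃ u1, u1 = cy - A2 * a := ⟨_, rfl⟩
  obtain ⟨v2, hv2⟩ : ∃ u2, u2 = ay + A2 * c := ⟨_, rfl⟩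
  obtain rfl : cx = u1 + A1 * a := by linarith
  obtain rfl : ax = u2 - A1 * c := by linarith
  obtain rfl : cy = v1 + A2 * a := by linarith
  obtain rfl : ay = v2 - A2 * c := by linarith
  clear hu1 hu2 hv1 hv2
  set F := a ^ 2 + c ^ 2 with hF
  have hF0 : 0 ≤ F := by positivity
  set N := u1 ^ 2 + u2 ^ 2 + (v1 ^ 2 + v2 ^ 2) with hN
  have hy2 : (0:ℝ) < y ^ 2 := by positivity
  -- b part
  have e1 : (y ^ 2)⁻¹ * (b * F) ≤ s * B * F + (y ^ 2)⁻¹ * F := by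
    have : (y ^ 2)⁻¹ * F * (b - 1) ≤ (y ^ 2)⁻¹ * F * (s * (y ^ 2 * B)) :=
      mul_le_mul_of_nonneg_left hb (by positivity)
    have h3 : (y ^ 2)⁻¹ * F * (s * (y ^ 2 * B)) = s * B * F := by field_simp
    linarith
  have e2 : 2 * s * (u2 * v1 - u1 * v2) ≤ N := by
    have h4 : |u2 * v1 - u1 * v2| ≤ N / 2 := by
      rw [abs_le]; constructor <;>
      nlinarith [sq_nonneg (u2 - v1), sq_nonneg (u1 + v2), sq_nonneg (u2 + v1), sq_nonneg (u1 - v2)]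
    have h5 : |s * (u2 * v1 - u1 * v2)| ≤ 1 * (N / 2) := by
      rw [abs_mul]; exact mul_le_mul hs h4 (abs_nonneg _) zero_le_one
    have := le_abs_self (s * (u2 * v1 - u1 * v2))
    linarith
  have e3 : sx * (a * v1 - c * v2) - sy * (a * u1 - c * u2)
      ≤ ε / 2 * N + 4 * C ^ 2 / ε * ((y ^ 2)⁻¹ * F) := by
    have hg' : sx ^ 2 + sy ^ 2 ≤ (2 * C) ^ 2 * (y ^ 2)⁻¹ := by
      rw [← div_eq_mul_inv, le_div_iff₀ hy2]; linarith
    have h6 : sx * (a * v1 - c * v2) - sy * (a * u1 - c * u2) ≤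
        ε / 2 * N + 1 / ε * ((sx ^ 2 + sy ^ 2) * F) := by
      have h7 : ε / 2 * N + 1 / ε * ((sx ^ 2 + sy ^ 2) * F)
        - (sx * (a * v1 - c * v2) - sy * (a * u1 - c * u2)) =
        1 / (2 * ε) * ((ε * v1 - sx * a) ^ 2 + (ε * v2 + sx * c) ^ 2 + (ε * u1 + sy * a) ^ 2
          + (ε * u2 - sy * c) ^ 2 + (sx ^ 2 + sy ^ 2) * F + 
          (sx * c) ^ 2 * 0) := by
        rw [hN, hF]; field_simp; ring
      have : 0 ≤ 1 / (2 * ε) * ((ε * v1 - sx * a) ^ 2 + (ε * v2 + sx * c) ^ 2 + (ε * u1 + sy * a) ^ 2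
          + (ε * u2 - sy * c) ^ 2 + (sx ^ 2 + sy ^ 2) * F + 
          (sx * c) ^ 2 * 0) := by positivity
      linarith
    have h8 : 1 / ε * ((sx ^ 2 + sy ^ 2) * F) ≤ 1 / ε * ((2 * C) ^ 2 * (y ^ 2)⁻¹ * F) := by
      gcongr
    have h9 : 1 / ε * ((2 * C) ^ 2 * (y ^ 2)⁻¹ * F) = 4 * C ^ 2 / ε * ((y ^ 2)⁻¹ * F) := by
      field_simp; ring
    linarith
  have e4 : sx * (a * (v1 + A2 * a) - c * (v2 - A2 * c) - A2 * (a * a + c * c))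
        - sy * (a * (u1 + A1 * a) - c * (u2 - A1 * c) - A1 * (a * a + c * c))
        + s * (2 * ((u2 - A1 * c) * (v1 + A2 * a) - (u1 + A1 * a) * (v2 - A2 * c)) - B * (a * a + c * c)
          - A2 * (2 * a * (u2 - A1 * c) + 2 * c * (u1 + A1 * a)) + A1 * (2 * a * (v2 - A2 * c) + 2 * c * (v1 + A2 * a)))
      = (sx * (a * v1 - c * v2) - sy * (a * u1 - c * u2)) + 2 * s * (u2 * v1 - u1 * v2) - s * B * F := by
    rw [hF]; ring
  have e5 : (u1 + A1 * a - A1 * a) ^ 2 + (u2 - A1 * c + A1 * c) ^ 2 +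
        ((v1 + A2 * a - A2 * a) ^ 2 + (v2 - A2 * c + A2 * c) ^ 2) = N := by rw [hN]; ring
  rw [e4, e5]
  linarith

lemma integral_volH (g : ℝ × ℝ → ℝ) :
    ∫ p, g p ∂volH = ∫ p in UHP, (p.2 ^ 2)⁻¹ * g p := by
  unfold volH
  rw [integral_withDensity_eq_integral_toReal_smul (by fun_prop) (by simp)]
  refine integral_congr_ae (Eventually.of_forall fun p => ?_)
  have : 0 ≤ (p.2 ^ 2)⁻¹ := by positivity
  simp [ENNReal.toReal_ofReal this]

lemma integrable_cut {K : Set (ℝ × ℝ)} (hK : IsCompact K) (hKU : K ⊆ UHP) {g : ℝ × ℝ → ℝ}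
    (hg : ContinuousOn g UHP) (h0 : ∀ p ∉ K, g p = 0) : IntegrableOn g UHP := by
  have : IntegrableOn g K := (hg.mono hKU).integrableOn_compact hK
  rw [integrableOn_iff_integrable_of_support_subset] at this
  · exact this.integrableOn
  · intro p hp; by_contra h; exact hp (h0 p h)

lemma cut_contDiff {K : Set (ℝ × ℝ)} (hK : IsCompact K) (hKU : K ⊆ UHP) {g : ℝ × ℝ → ℝ}
    (hg : ∀ p ∈ UHP, ContDiffAt ℝ 1 g p) (h0 : ∀ p ∉ K, g p = 0) : ContDiff ℝ 1 g := by
  rw [contDiff_iff_contDiffAt]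
  intro p
  by_cases hp : p ∈ K
  · exact hg p (hKU hp)
  · have : g =ᶠ[nhds p] fun _ => 0 := by
      filter_upwards [hK.isClosed.isOpen_compl.mem_nhds hp] with q hq using h0 q hq
    exact contDiffAt_const.congr_of_eventuallyEq this

lemma integral_div_zero {K : Set (ℝ × ℝ)} (hK : IsCompact K) (hKU : K ⊆ UHP) {g : ℝ × ℝ → ℝ}
    (hg : ∀ p ∈ UHP, ContDiffAt ℝ 1 g p) (h0 : ∀ p ∉ K, g p = 0) (v : ℝ × ℝ) :
    IntegrableOn (fun p => fderiv ℝ g p v) UHP ∧ ∫ p in UHP, fderiv ℝ g p v = 0 := by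
  have hc := cut_contDiff hK hKU hg h0
  have hd : Continuous (fun p => fderiv ℝ g p v) :=
    (hc.continuous_fderiv (by norm_num)).clm_apply continuous_const
  have h0' : ∀ p ∉ K, fderiv ℝ g p v = 0 := by
    intro p hp
    have : g =ᶠ[nhds p] fun _ => 0 := by
      filter_upwards [hK.isClosed.isOpen_compl.mem_nhds hp] with q hq using h0 q hq
    rw [this.fderiv_eq]; simp
  have hcs : HasCompactSupport g := HasCompactSupport.intro hK h0
  have hcs' : HasCompactSupport (fun p => fderiv ℝ g p v) := HasCompactSupport.intro hK h0'
  have hi : Integrable (fun p => fderiv ℝ g p v) := hd.integrable_of_hasCompactSupport hcs'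
  refine ⟨hi.integrableOn, ?_⟩
  rw [setIntegral_eq_integral_of_forall_compl_eq_zero
    (fun p hp => h0' p (fun h => hp (hKU h)))]
  have := integral_mul_fderiv_eq_neg_fderiv_mul_of_integrable (𝕜 := ℝ) (μ := (volume : Measure (ℝ × ℝ)))
    (f := fun _ => (1:ℝ)) (g := g) (v := v) (by simp) (by simpa using hi)
    (by simpa using hc.continuous.integrable_of_hasCompactSupport hcs) (fun x _ => by fun_prop)
    (fun x _ => hc.differentiable (by norm_num) x)
  simpa using this

lemma dd_contDiffAt {A : ℝ × ℝ → ℝ} (hA : ContDiffOn ℝ 2 A UHP) {p : ℝ × ℝ} (hp : p ∈ UHP)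
    (v : ℝ × ℝ) : ContDiffAt ℝ 1 (fun q => fderiv ℝ A q v) p :=
  ((hA.contDiffAt (isOpen_UHP'.mem_nhds hp)).fderiv_right (m := 1) (by norm_num)).clm_apply
    contDiffAt_const

lemma fieldB_contDiffAt {A₁ A₂ : ℝ × ℝ → ℝ} (hA₁ : ContDiffOn ℝ 2 A₁ UHP)
    (hA₂ : ContDiffOn ℝ 2 A₂ UHP) {p : ℝ × ℝ} (hp : p ∈ UHP) :
    ContDiffAt ℝ 1 (fieldB A₁ A₂) p := by
  unfold fieldB dXr dYr
  exact ((contDiff_snd.pow 2).contDiffAt).mul ((dd_contDiffAt hA₂ hp _).sub (dd_contDiffAt hA₁ hp _))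

lemma curr_contDiffAt {a c A : ℝ × ℝ → ℝ} (ha : ContDiff ℝ 2 a) (hc : ContDiff ℝ 2 c)
    (hA : ContDiffOn ℝ 2 A UHP) {p : ℝ × ℝ} (hp : p ∈ UHP) (v : ℝ × ℝ) :
    ContDiffAt ℝ 1 (curr a c A v) p := by
  have ha1 : ContDiffAt ℝ 1 a p := (ha.of_le (by norm_num)).contDiffAt
  have hc1 : ContDiffAt ℝ 1 c p := (hc.of_le (by norm_num)).contDiffAt
  have hA1 : ContDiffAt ℝ 1 A p :=
    (hA.contDiffAt (isOpen_UHP'.mem_nhds hp)).of_le (by norm_num)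
  unfold curr
  exact ((ha1.mul (dd_contDiffAt hc.contDiffOn hp v)).sub
    (hc1.mul (dd_contDiffAt ha.contDiffOn hp v))).sub (hA1.mul ((ha1.mul ha1).add (hc1.mul hc1)))

lemma integral_comb {μ : Measure (ℝ × ℝ)} {F G H K : ℝ × ℝ → ℝ} (k l : ℝ) (hF : Integrable F μ)
    (hG : Integrable G μ) (hH : Integrable H μ) (hK : Integrable K μ)
    (h0 : ∫ p, H p ∂μ = 0) (h1 : ∫ p, K p ∂μ = 0) :
    ∫ p, (k * F p + l * G p - (H p - K p)) ∂μ = k * ∫ p, F p ∂μ + l * ∫ p, G p ∂μ := by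
  have hkF : Integrable (fun p => k * F p) μ := hF.const_mul _
  have hlG : Integrable (fun p => l * G p) μ := hG.const_mul _
  have hs : Integrable (fun p => k * F p + l * G p) μ := hkF.add hlG
  have hd : Integrable (fun p => H p - K p) μ := hH.sub hK
  rw [integral_sub hs hd, integral_add hkF hlG, integral_sub hH hK, h0, h1,
    integral_const_mul, integral_const_mul]
  ring

lemma norm_alg (d z : ℂ) (A : ℝ) :
    ‖-Complex.I * d - (A : ℂ) * z‖ ^ 2 = (d.im - A * z.re) ^ 2 + (d.re + A * z.im) ^ 2 := by
  rw [Complex.sq_norm, Complex.normSq_apply]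
  simp
  ring

lemma norm_alg2 (z : ℂ) : ‖z‖ ^ 2 = z.re ^ 2 + z.im ^ 2 := by
  rw [Complex.sq_norm, Complex.normSq_apply]
  ring

/-- under (H1) and (H2), for every `ε ∈ (0,1)` there is `C_ε > 0` with
`∫ b |f|² dv ≤ (1 + ε/2) q_A(f) + C_ε ‖f‖²` for all test functions `f`. -/
theorem intensity_form_bound
    (A₁ A₂ : ℝ × ℝ → ℝ) (hA₁ : ContDiffOn ℝ 2 A₁ UHP) (hA₂ : ContDiffOn ℝ 2 A₂ UHP)
    (h1 : H1 A₁ A₂) (h2 : ∃ C₀ > 0, H2 C₀ A₁ A₂)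
    (ε : ℝ) (hε0 : 0 < ε) (hε1 : ε < 1) :
    ∃ Cε > 0, ∀ f : ℝ × ℝ → ℂ, IsTestOn UHP f →
      ∫ p, intenB A₁ A₂ p * ‖f p‖ ^ 2 ∂volH ≤
        (1 + ε / 2) * qA A₁ A₂ f + Cε * ∫ p, ‖f p‖ ^ 2 ∂volH := by
  obtain ⟨C, hC, h2⟩ := h2
  refine ⟨1 + 4 * C ^ 2 / ε, by positivity, ?_⟩
  rintro f ⟨hf, hfc, hfU⟩
  have hf2 : ContDiff ℝ 2 f := (contDiff_infty.1 hf) 2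
  obtain ⟨a, had⟩ : ∃ a : ℝ × ℝ → ℝ, a = fun p => (f p).re := ⟨_, rfl⟩
  obtain ⟨c, hcd⟩ : ∃ a : ℝ × ℝ → ℝ, a = fun p => (f p).im := ⟨_, rfl⟩
  have ha : ContDiff ℝ 2 a := by
    rw [had]; exact Complex.reCLM.contDiff.comp hf2
  have hc : ContDiff ℝ 2 c := by
    rw [hcd]; exact Complex.imCLM.contDiff.comp hf2
  have hda : ∀ p v, (fderiv ℝ f p v).re = fderiv ℝ a p v := by
    intro p v
    have := (Complex.reCLM.hasFDerivAt.comp p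
      ((hf2.differentiable (by norm_num)) p).hasFDerivAt).fderiv
    have h' : (Complex.reCLM ∘ f) = a := by rw [had]; rfl
    rw [h'] at this
    rw [this]; rfl
  have hdc : ∀ p v, (fderiv ℝ f p v).im = fderiv ℝ c p v := by
    intro p v
    have := (Complex.imCLM.hasFDerivAt.comp p
      ((hf2.differentiable (by norm_num)) p).hasFDerivAt).fderiv
    have h' : (Complex.imCLM ∘ f) = c := by rw [hcd]; rfl
    rw [h'] at this
    rw [this]; rfl
  have hK : IsCompact (tsupport f) := hfc
  have hf0 : ∀ p ∉ tsupport f, f p = 0 := fun p hp => image_eq_zero_of_notMem_tsupport hp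
  have ha0 : ∀ p ∉ tsupport f, a p = 0 := fun p hp => by rw [had]; simp [hf0 p hp]
  have hc0 : ∀ p ∉ tsupport f, c p = 0 := fun p hp => by rw [hcd]; simp [hf0 p hp]
  have hfd0 : ∀ p ∉ tsupport f, fderiv ℝ f p = 0 := fun p hp => by
    have : f =ᶠ[nhds p] fun _ => 0 := by
      filter_upwards [hK.isClosed.isOpen_compl.mem_nhds hp] with q hq using hf0 q hq
    rw [this.fderiv_eq]; simp
  -- smoothed sign
  obtain ⟨s, hsd⟩ : ∃ s : ℝ × ℝ → ℝ, s = fun p => sg (fieldB A₁ A₂ p) := ⟨_, rfl⟩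
  have hs : ∀ p ∈ UHP, ContDiffAt ℝ 1 s p := fun p hp => by
    rw [hsd]; exact sg_contDiff.contDiffAt.comp p (fieldB_contDiffAt hA₁ hA₂ hp)
  have hsder : ∀ p ∈ UHP, p.2 ^ 2 * ((fderiv ℝ s p (1, 0)) ^ 2 + (fderiv ℝ s p (0, 1)) ^ 2)
      ≤ (2 * C) ^ 2 := by
    intro p hp
    have hB := ((fieldB_contDiffAt hA₁ hA₂ hp).differentiableAt (by norm_num)).hasFDerivAt
    have hd := ((sg_hasDeriv (fieldB A₁ A₂ p)).comp_hasFDerivAt p hB).fderiv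
    have h' : (sg ∘ fieldB A₁ A₂) = s := by rw [hsd]; rfl
    rw [h'] at hd
    rw [hd]
    obtain ⟨hb0, hb1⟩ := sg_deriv_bound (fieldB A₁ A₂ p)
    have hh := h2 p hp
    unfold intenB dXr dYr at hh
    simp only [smul_apply, smul_eq_mul]
    generalize 1 / ((1 + fieldB A₁ A₂ p ^ 2) * Real.sqrt (1 + fieldB A₁ A₂ p ^ 2)) = k at *
    generalize fderiv ℝ (fieldB A₁ A₂) p (1, 0) = X at *
    generalize fderiv ℝ (fieldB A₁ A₂) p (0, 1) = Y at *
    have hXY : Real.sqrt (X ^ 2 + Y ^ 2) ^ 2 = X ^ 2 + Y ^ 2 := Real.sq_sqrt (by positivity)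
    have hp' : 0 < p.2 := hp
    have h3 : k * (p.2 * Real.sqrt (X ^ 2 + Y ^ 2)) ≤ 2 * C := by
      have := mul_le_mul_of_nonneg_left hh hb0
      nlinarith
    have h4 : (k * (p.2 * Real.sqrt (X ^ 2 + Y ^ 2))) ^ 2 ≤ (2 * C) ^ 2 :=
      pow_le_pow_left₀ (by positivity) h3 2
    calc _ = (k * (p.2 * Real.sqrt (X ^ 2 + Y ^ 2))) ^ 2 := by
            
            have : (k * (p.2 * Real.sqrt (X ^ 2 + Y ^ 2))) ^ 2 =
              k ^ 2 * p.2 ^ 2 * Real.sqrt (X ^ 2 + Y ^ 2) ^ 2 := by ring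
            rw [this, hXY]; ring
      _ ≤ _ := h4
  have hW2 := integral_div_zero hK hfU (g := fun q => s q * curr a c A₂ (0, 1) q)
    (fun p hp => (hs p hp).mul (curr_contDiffAt ha hc hA₂ hp _))
    (fun p hp => by simp [curr, ha0 p hp, hc0 p hp]) (1, 0)
  have hW1 := integral_div_zero hK hfU (g := fun q => s q * curr a c A₁ (1, 0) q)
    (fun p hp => (hs p hp).mul (curr_contDiffAt ha hc hA₁ hp _))
    (fun p hp => by simp [curr, ha0 p hp, hc0 p hp]) (0, 1)
  have hyc : ContinuousOn (fun p : ℝ × ℝ => (p.2 ^ 2)⁻¹) UHP :=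
    ContinuousOn.inv₀ (by fun_prop) (fun p hp => by
      have hp' : 0 < p.2 := hp
      positivity)
  have hfcont := hf2.continuous
  have hdfc : ∀ v, Continuous (fun p => fderiv ℝ f p v) := fun v =>
    (hf2.continuous_fderiv (by norm_num)).clm_apply continuous_const
  have hBc : ContinuousOn (fieldB A₁ A₂) UHP := fun p hp =>
    (fieldB_contDiffAt hA₁ hA₂ hp).continuousAt.continuousWithinAt
  have hAc₁ := hA₁.continuousOn
  have hAc₂ := hA₂.continuousOn
  have hI1 : IntegrableOn (fun p : ℝ × ℝ => (p.2 ^ 2)⁻¹ * (intenB A₁ A₂ p * ‖f p‖ ^ 2)) UHP := by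
    refine integrable_cut hK hfU ?_ (fun p hp => by simp [hf0 p hp])
    exact hyc.mul (hBc.abs.mul (by fun_prop))
  have hI2 : IntegrableOn (fun p : ℝ × ℝ => (p.2 ^ 2)⁻¹ * ‖f p‖ ^ 2) UHP := by
    refine integrable_cut hK hfU ?_ (fun p hp => by simp [hf0 p hp])
    exact hyc.mul (by fun_prop)
  have hI3 : IntegrableOn (fun p : ℝ × ℝ => (p.2 ^ 2)⁻¹ * (p.2 ^ 2 *
      (‖-Complex.I * dX f p - (A₁ p : ℂ) * f p‖ ^ 2 +
        ‖-Complex.I * dY f p - (A₂ p : ℂ) * f p‖ ^ 2))) UHP := by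
    refine integrable_cut hK hfU ?_ (fun p hp => by simp [hf0 p hp, dX, dY, hfd0 p hp])
    have hx := (hdfc (1, 0)).continuousOn (s := UHP)
    have hy := (hdfc (0, 1)).continuousOn (s := UHP)
    have hz := hfcont.continuousOn (s := UHP)
    have c1 := Complex.continuous_ofReal.comp_continuousOn hAc₁
    have c2 := Complex.continuous_ofReal.comp_continuousOn hAc₂
    refine hyc.mul (ContinuousOn.mul (by fun_prop) (ContinuousOn.add ?_ ?_))
    · exact (((continuousOn_const.mul hx).sub (c1.mul hz)).norm).pow 2
    · exact (((continuousOn_const.mul hy).sub (c2.mul hz)).norm).pow 2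
  rw [qA, integral_volH, integral_volH, integral_volH]
  have key : ∫ p in UHP, (p.2 ^ 2)⁻¹ * (intenB A₁ A₂ p * ‖f p‖ ^ 2) ≤
      ∫ p in UHP, ((1 + ε / 2) * ((p.2 ^ 2)⁻¹ * (p.2 ^ 2 *
      (‖-Complex.I * dX f p - (A₁ p : ℂ) * f p‖ ^ 2 +
        ‖-Complex.I * dY f p - (A₂ p : ℂ) * f p‖ ^ 2)))
        + (1 + 4 * C ^ 2 / ε) * ((p.2 ^ 2)⁻¹ * ‖f p‖ ^ 2)
        - (fderiv ℝ (fun q => s q * curr a c A₂ (0, 1) q) p (1, 0)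
          - fderiv ℝ (fun q => s q * curr a c A₁ (1, 0) q) p (0, 1))) := by
    refine setIntegral_mono_on hI1
      (((hI3.const_mul _).add (hI2.const_mul _)).sub (hW2.1.sub hW1.1))
      isOpen_UHP'.measurableSet ?_
    intro p hp
    have hp' : 0 < p.2 := hp
    have hp2 : p.2 ^ 2 ≠ 0 := by positivity
    have hsp := (hs p hp).differentiableAt (by norm_num)
    have hAd : ∀ {A : ℝ × ℝ → ℝ}, ContDiffOn ℝ 2 A UHP → DifferentiableAt ℝ A p := fun h =>
      (h.contDiffAt (isOpen_UHP'.mem_nhds hp)).differentiableAt (by norm_num)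
    rw [fderiv_scurr ha hc p (0, 1) (1, 0) hsp (hAd hA₂),
      fderiv_scurr ha hc p (1, 0) (0, 1) hsp (hAd hA₁),
      (fderiv_sym ha p (0, 1) (1, 0)).2, (fderiv_sym hc p (0, 1) (1, 0)).2,
      inv_mul_cancel_left₀ hp2, norm_alg, norm_alg, norm_alg2, dX, dY, hda, hdc, hda, hdc]
    have e1 : (f p).re = a p := by rw [had]
    have e2 : (f p).im = c p := by rw [hcd]
    rw [e1, e2]
    have hs1 : |s p| ≤ 1 := by rw [hsd]; exact sg_abs_le _
    have hb : intenB A₁ A₂ p - 1 ≤ s p * (p.2 ^ 2 * (dXr A₂ p - dYr A₁ p)) := by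
      rw [hsd]; exact sg_mul_ge (fieldB A₁ A₂ p)
    have := pointwise_alg ε C p.2 (s p) (fderiv ℝ s p (1, 0)) (fderiv ℝ s p (0, 1)) (a p) (c p)
      (fderiv ℝ a p (1, 0)) (fderiv ℝ a p (0, 1)) (fderiv ℝ c p (1, 0)) (fderiv ℝ c p (0, 1))
      (A₁ p) (A₂ p) _ _ hε0 hp' hC hs1 (hsder p hp) hb
    refine this.trans (le_of_eq ?_)
    unfold curr dXr dYr
    ring
  refine key.trans (le_of_eq ?_)
  exact integral_comb _ _ hI3 hI2 hW2.1 hW1.1 hW2.2 hW1.2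
end
end

section
/- Assume (H2). There exists a constant C > 0, depending only on a₀ and C₀, such that for all (x,t) ∈ K: |Ã₁(x,t) - A₁⁰(x,t)| ≤ C ε₀² e^{-t₀} b(x₀, e^{t₀}). -/
open MeasureTheory Real Filter

noncomputable section

/-- The rectangle `K = X₀ + K₀` with `K₀ = (-ε₀ a e^{t₀}/2, ε₀ a e^{t₀}/2) × (-ε₀/2, ε₀/2)`. -/
def Krect (x₀ t₀ a ε₀ : ℝ) : Set (ℝ × ℝ) :=
  Set.Ioo (x₀ - ε₀ * a * Real.exp t₀ / 2) (x₀ + ε₀ * a * Real.exp t₀ / 2) ×ˢ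
    Set.Ioo (t₀ - ε₀ / 2) (t₀ + ε₀ / 2)

/-- `Ã₁(x,t) = -∫_{e^{t₀}}^{e^t} b̃(x,s) s⁻² ds`. -/
def Atil (A₁ A₂ : ℝ × ℝ → ℝ) (t₀ : ℝ) (p : ℝ × ℝ) : ℝ :=
  -∫ s in Real.exp t₀..Real.exp p.2, fieldB A₁ A₂ (p.1, s) / s ^ 2

/-- `A₁⁰(x,t) = -(t - t₀) e^{-t₀} b̃₀`. -/
def Azero (t₀ b₀ : ℝ) (p : ℝ × ℝ) : ℝ := -(p.2 - t₀) * Real.exp (-t₀) * b₀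

/-- The Dirichlet form `q̂^Ã_K`. -/
def qhatK (A₁ A₂ : ℝ × ℝ → ℝ) (x₀ t₀ a ε₀ : ℝ) (w : ℝ × ℝ → ℂ) : ℝ :=
  ∫ p in Krect x₀ t₀ a ε₀,
    (Real.exp (2 * p.2) * ‖-Complex.I * dX w p - (Atil A₁ A₂ t₀ p : ℂ) * w p‖ ^ 2
      + ‖dY w p‖ ^ 2 + (1/4) * ‖w p‖ ^ 2)

/-- The Dirichlet form `q̂^{Ã,0}_K` (with frozen factor `e^{2t₀}`). -/
def qhatK0 (A₁ A₂ : ℝ × ℝ → ℝ) (x₀ t₀ a ε₀ : ℝ) (w : ℝ × ℝ → ℂ) : ℝ :=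
  ∫ p in Krect x₀ t₀ a ε₀,
    (Real.exp (2 * t₀) * ‖-Complex.I * dX w p - (Atil A₁ A₂ t₀ p : ℂ) * w p‖ ^ 2
      + ‖dY w p‖ ^ 2 + (1/4) * ‖w p‖ ^ 2)

/-- The Dirichlet form `q^{A⁰,0}_K` of the frozen constant magnetic field `b̃₀`. -/
def qK0 (x₀ t₀ a ε₀ b₀ : ℝ) (w : ℝ × ℝ → ℂ) : ℝ :=
  ∫ p in Krect x₀ t₀ a ε₀,
    (Real.exp (2 * t₀) * ‖-Complex.I * dX w p - (Azero t₀ b₀ p : ℂ) * w p‖ ^ 2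
      + ‖dY w p‖ ^ 2 + (1/4) * ‖w p‖ ^ 2)


lemma fieldB_contDiffOn (A₁ A₂ : ℝ × ℝ → ℝ) (h₁ : ContDiffOn ℝ 2 A₁ UHP)
    (h₂ : ContDiffOn ℝ 2 A₂ UHP) : ContDiffOn ℝ 1 (fieldB A₁ A₂) UHP := by
  have hO : IsOpen UHP := isOpen_lt continuous_const continuous_snd
  have k₁ := h₁.fderiv_of_isOpen (m := 1) hO (by norm_num)
  have k₂ := h₂.fderiv_of_isOpen (m := 1) hO (by norm_num)
  unfold fieldB dXr dYr
  exact (contDiff_snd.contDiffOn.pow 2).mul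
    ((k₂.clm_apply contDiffOn_const).sub (k₁.clm_apply contDiffOn_const))

lemma gron_bound (f f' : ℝ → ℝ) (K : ℝ) (hK : 0 < K)
    (hf : ∀ r ∈ Set.Icc (0:ℝ) 1, HasDerivAt f (f' r) r)
    (hb : ∀ r ∈ Set.Icc (0:ℝ) 1, |f' r| ≤ K * (|f r| + 1)) :
    |f 1 - f 0| ≤ (|f 0| + 1) * (Real.exp K - 1) := by
  have := norm_le_gronwallBound_of_norm_deriv_right_le (f := fun r => f r - f 0) (f' := f')
    (δ := 0) (K := K) (ε := K * (|f 0| + 1)) (a := 0) (b := 1)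
    (fun r hr => ((hf r hr).sub_const _).continuousAt.continuousWithinAt)
    (fun r hr => ((hf r ⟨hr.1, hr.2.le⟩).sub_const _).hasDerivWithinAt)
    (by simp)
    (fun r hr => by
      have h := hb r ⟨hr.1, hr.2.le⟩
      have h2 : |f r| ≤ |f r - f 0| + |f 0| := by
        have := abs_add_le (f r - f 0) (f 0)
        simpa using this
      simp only [Real.norm_eq_abs]
      nlinarith)
    1 (by simp)
  rw [gronwallBound_of_K_ne_0 hK.ne'] at this
  simp only [Real.norm_eq_abs, sub_zero, mul_one, zero_mul, zero_add] at this
  rwa [mul_div_cancel_left₀ _ hK.ne'] at this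

lemma field_diff (C₀ : ℝ) (hC₀ : 0 < C₀) (a₀ : ℝ) (ha₀ : 1 < a₀) (A₁ A₂ : ℝ × ℝ → ℝ)
    (hc : ContDiffOn ℝ 1 (fieldB A₁ A₂) UHP) (hH : H2 C₀ A₁ A₂) (e : ℝ) (he : 0 < e) (he1 : e < 1)
    (x₀ y₀ x s : ℝ) (hy : 0 < y₀) (hb : 1 < intenB A₁ A₂ (x₀, y₀))
    (hx : |x - x₀| ≤ e * a₀ * y₀ / 2) (hs : |s - y₀| ≤ e * y₀) (hs2 : y₀ / 2 ≤ s) :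
    |fieldB A₁ A₂ (x, s) - fieldB A₁ A₂ (x₀, y₀)| ≤
      2 * (C₀ * (a₀ + 2)) * Real.exp (C₀ * (a₀ + 2)) * e * intenB A₁ A₂ (x₀, y₀) := by
  have hO : IsOpen UHP := isOpen_lt continuous_const continuous_snd
  set M := C₀ * (a₀ + 2) with hM
  have hMpos : 0 < M := by positivity
  set B := fieldB A₁ A₂ with hB
  let γ : ℝ → ℝ × ℝ := fun r => (x₀ + r * (x - x₀), y₀ + r * (s - y₀))
  have hγ : ∀ r, HasDerivAt γ (x - x₀, s - y₀) r := by
    intro r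
    have h1 : HasDerivAt (fun r : ℝ => x₀ + r * (x - x₀)) (x - x₀) r := by
      simpa using ((hasDerivAt_id r).mul_const (x - x₀)).const_add x₀
    have h2 : HasDerivAt (fun r : ℝ => y₀ + r * (s - y₀)) (s - y₀) r := by
      simpa using ((hasDerivAt_id r).mul_const (s - y₀)).const_add y₀
    exact h1.prodMk h2
  have hlow : ∀ r ∈ Set.Icc (0:ℝ) 1, y₀ / 2 ≤ (γ r).2 := by
    rintro r ⟨h0, h1⟩
    show y₀ / 2 ≤ y₀ + r * (s - y₀)
    nlinarith
  have key := gron_bound (fun r => B (γ r)) (fun r => fderiv ℝ B (γ r) (x - x₀, s - y₀)) (M * e)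
    (by positivity)
    (fun r hr => by
      have hmem : γ r ∈ UHP := lt_of_lt_of_le (by positivity) (hlow r hr)
      have hd := ((hc.differentiableOn (by norm_num)).differentiableAt (hO.mem_nhds hmem))
      exact hd.hasFDerivAt.comp_hasDerivAt r (hγ r))
    (fun r hr => by
      have hmem : γ r ∈ UHP := lt_of_lt_of_le (by positivity) (hlow r hr)
      have hh := hH _ hmem
      have hl := hlow r hr
      have e1 : fderiv ℝ B (γ r) (x - x₀, s - y₀) =
          (x - x₀) * dXr B (γ r) + (s - y₀) * dYr B (γ r) := by
        have : ((x - x₀, s - y₀) : ℝ × ℝ) = (x - x₀) • ((1, 0) : ℝ × ℝ) + (s - y₀) • ((0, 1) : ℝ × ℝ) := by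
          simp
        rw [this, map_add, map_smul, map_smul]
        rfl
      set G := Real.sqrt ((dXr B (γ r)) ^ 2 + (dYr B (γ r)) ^ 2) with hG
      have hG0 : 0 ≤ G := Real.sqrt_nonneg _
      have g1 : |dXr B (γ r)| ≤ G := Real.abs_le_sqrt (by nlinarith [sq_nonneg (dYr B (γ r))])
      have g2 : |dYr B (γ r)| ≤ G := Real.abs_le_sqrt (by nlinarith [sq_nonneg (dXr B (γ r))])
      have hin : intenB A₁ A₂ (γ r) = |B (γ r)| := rfl
      rw [hin] at hh
      have hh2 : y₀ / 2 * G ≤ C₀ * (|B (γ r)| + 1) :=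
        (mul_le_mul_of_nonneg_right hl hG0).trans hh
      calc |fderiv ℝ B (γ r) (x - x₀, s - y₀)|
          ≤ |x - x₀| * |dXr B (γ r)| + |s - y₀| * |dYr B (γ r)| := by
            rw [e1, ← abs_mul, ← abs_mul]; exact abs_add_le _ _
        _ ≤ (e * a₀ * y₀ / 2) * G + (e * y₀) * G := by gcongr
        _ = e * (a₀ + 2) * (y₀ / 2 * G) := by ring
        _ ≤ e * (a₀ + 2) * (C₀ * (|B (γ r)| + 1)) := by gcongr
        _ = M * e * (|B (γ r)| + 1) := by rw [hM]; ring)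
  have t1 : γ 1 = (x, s) := by simp [γ]
  have t0 : γ 0 = (x₀, y₀) := by simp [γ]
  simp only [t1, t0] at key
  have hin : intenB A₁ A₂ (x₀, y₀) = |B (x₀, y₀)| := rfl
  rw [hin] at hb ⊢
  have hexp : Real.exp (M * e) - 1 ≤ M * e * Real.exp M := by
    have h1 : 1 - M * e ≤ Real.exp (-(M * e)) := by
      have := Real.add_one_le_exp (-(M * e)); linarith
    have h2 : Real.exp (M * e) * Real.exp (-(M * e)) = 1 := by
      rw [← Real.exp_add]; simp
    have h3 : Real.exp (M * e) ≤ Real.exp M := Real.exp_le_exp.2 (by nlinarith)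
    have h4 : 0 < Real.exp (M * e) := Real.exp_pos _
    have h5 : Real.exp (M * e) - 1 ≤ M * e * Real.exp (M * e) := by nlinarith
    exact h5.trans (by gcongr)
  have hnn : 0 ≤ M * e * Real.exp M := by positivity
  calc _ ≤ _ := key
    _ ≤ (|B (x₀, y₀)| + 1) * (M * e * Real.exp M) := by gcongr
    _ ≤ (2 * |B (x₀, y₀)|) * (M * e * Real.exp M) := by gcongr; linarith
    _ = _ := by ring

/-- comparison of the gauge-transformed potential `Ã₁` with the frozen
linear potential `A₁⁰` on the rectangle `K`. -/
theorem potential_comparison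
    (C₀ : ℝ) (hC₀ : 0 < C₀) (a₀ : ℝ) (ha₀ : 1 < a₀) :
    ∃ C > 0, ∀ A₁ A₂ : ℝ × ℝ → ℝ, ContDiffOn ℝ 2 A₁ UHP → ContDiffOn ℝ 2 A₂ UHP →
      H2 C₀ A₁ A₂ →
      ∀ a : ℝ, 1 / a₀ < a → a ≤ a₀ → ∀ ε₀ : ℝ, 0 < ε₀ → ε₀ < 1 →
      ∀ x₀ t₀ : ℝ, 1 < intenB A₁ A₂ (x₀, Real.exp t₀) →
      ∀ p ∈ Krect x₀ t₀ a ε₀,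
        |Atil A₁ A₂ t₀ p - Azero t₀ (fieldB A₁ A₂ (x₀, Real.exp t₀)) p| ≤
          C * ε₀ ^ 2 * Real.exp (-t₀) * intenB A₁ A₂ (x₀, Real.exp t₀) := by
  set D := 2 * (C₀ * (a₀ + 2)) * Real.exp (C₀ * (a₀ + 2)) with hD
  have hDpos : 0 < D := by positivity
  refine ⟨4 * D + 1, by positivity, ?_⟩
  rintro A₁ A₂ h₁ h₂ hH a ha1 ha2 e he he1 x₀ t₀ hb ⟨x, t⟩ hp
  obtain ⟨⟨hx1, hx2⟩, ht1, ht2⟩ := hp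
  simp only at hx1 hx2 ht1 ht2
  have hc := fieldB_contDiffOn A₁ A₂ h₁ h₂
  set y₀ := Real.exp t₀ with hy₀
  have hy : 0 < y₀ := Real.exp_pos _
  set B := fieldB A₁ A₂ with hB
  set b₀ := B (x₀, y₀) with hb₀
  have hin : intenB A₁ A₂ (x₀, y₀) = |b₀| := rfl
  have hx : |x - x₀| ≤ e * a₀ * y₀ / 2 := by
    have : e * a * y₀ ≤ e * a₀ * y₀ := by gcongr
    rw [abs_le]; constructor <;> linarith
  have hu : |t - t₀| ≤ e / 2 := by rw [abs_le]; constructor <;> linarith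
  have hT : Real.exp t = y₀ * Real.exp (t - t₀) := by
    rw [hy₀, ← Real.exp_add]; congr 1; ring
  have hE : |Real.exp t - y₀| ≤ e * y₀ := by
    have h := Real.abs_exp_sub_one_le (x := t - t₀) (by linarith)
    have : Real.exp t - y₀ = y₀ * (Real.exp (t - t₀) - 1) := by rw [hT]; ring
    rw [this, abs_mul, abs_of_pos hy]
    nlinarith
  have hT2 : y₀ / 2 ≤ Real.exp t := by
    have h := Real.add_one_le_exp (t - t₀)
    have := (abs_le.1 hu).1
    rw [hT]; nlinarith
  have hsb : ∀ s ∈ Set.uIcc y₀ (Real.exp t), y₀ / 2 ≤ s ∧ |s - y₀| ≤ e * y₀ := by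
    intro s hs
    refine ⟨?_, (Set.abs_sub_left_of_mem_uIcc hs).trans hE⟩
    exact (le_min (by linarith) hT2).trans hs.1
  have hpos : ∀ s ∈ Set.uIcc y₀ (Real.exp t), 0 < s := fun s hs => by
    linarith [(hsb s hs).1]
  have hci : ContinuousOn (fun s => B (x, s) / s ^ 2) (Set.uIcc y₀ (Real.exp t)) := by
    refine ContinuousOn.div (hc.continuousOn.comp (by fun_prop) (fun s hs => hpos s hs))
      (by fun_prop) (fun s hs => pow_ne_zero _ (hpos s hs).ne')
  have hci2 : ContinuousOn (fun s : ℝ => b₀ / s ^ 2) (Set.uIcc y₀ (Real.exp t)) :=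
    ContinuousOn.div continuousOn_const (by fun_prop) (fun s hs => pow_ne_zero _ (hpos s hs).ne')
  have hint2 : ∫ s in y₀..Real.exp t, b₀ / s ^ 2 = b₀ * (1 / y₀ - 1 / Real.exp t) := by
    rw [intervalIntegral.integral_eq_sub_of_hasDerivAt (f := fun s => - b₀ * s⁻¹) ?_
      hci2.intervalIntegrable]
    · simp only [one_div]; ring
    · intro s hs
      have := (hasDerivAt_inv (hpos s hs).ne').const_mul (-b₀)
      have e2 : b₀ / s ^ 2 = -b₀ * -(s ^ 2)⁻¹ := by rw [div_eq_mul_inv]; ring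
      rw [e2]
      exact this
  have hsplit := intervalIntegral.integral_sub hci.intervalIntegrable hci2.intervalIntegrable
    (μ := volume)
  have hbd : |∫ s in y₀..Real.exp t, (B (x, s) / s ^ 2 - b₀ / s ^ 2)| ≤
      (D * e * |b₀| * (4 / y₀ ^ 2)) * |Real.exp t - y₀| := by
    rw [← Real.norm_eq_abs]
    apply intervalIntegral.norm_integral_le_of_norm_le_const
    intro s hs
    have hs' := Set.uIoc_subset_uIcc hs
    obtain ⟨q1, q2⟩ := hsb s hs'
    have hfd := field_diff C₀ hC₀ a₀ ha₀ A₁ A₂ hc hH e he he1 x₀ y₀ x s hy hb hx q2 q1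
    have hsp := hpos s hs'
    rw [Real.norm_eq_abs, ← sub_div, abs_div, abs_of_pos (pow_pos hsp 2), div_eq_mul_inv]
    have hq : (s ^ 2)⁻¹ ≤ 4 / y₀ ^ 2 := by
      rw [show 4 / y₀ ^ 2 = ((y₀ / 2) ^ 2)⁻¹ by field_simp; norm_num]
      gcongr
    gcongr
    exact hfd
  have hA : Atil A₁ A₂ t₀ (x, t) - Azero t₀ b₀ (x, t) =
      -(∫ s in y₀..Real.exp t, (B (x, s) / s ^ 2 - b₀ / s ^ 2)) +
        y₀⁻¹ * b₀ * (Real.exp (-(t - t₀)) - 1 - (-(t - t₀))) := by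
    rw [hsplit, hint2]
    simp only [Atil, Azero]
    rw [Real.exp_neg t₀, ← hy₀, hT, Real.exp_neg (t - t₀)]
    have := Real.exp_pos (t - t₀)
    field_simp
    ring
  rw [hA, hin, Real.exp_neg t₀, ← hy₀]
  have hq := Real.abs_exp_sub_one_sub_id_le (x := -(t - t₀)) (by rw [abs_neg]; linarith)
  have hq2 : (-(t - t₀)) ^ 2 ≤ e ^ 2 := by
    rw [neg_sq, ← sq_abs]; gcongr; linarith
  calc _ ≤ _ := abs_add_le _ _
    _ ≤ (D * e * |b₀| * (4 / y₀ ^ 2)) * (e * y₀) + y₀⁻¹ * |b₀| * e ^ 2 := by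
      rw [abs_neg, abs_mul, abs_mul, abs_of_pos (inv_pos.2 hy)]
      gcongr
      · exact hbd.trans (by gcongr)
      · exact hq.trans hq2
    _ = _ := by field_simp
end
end

section
/- For every real λ: N(λ; q^{A⁰,0}_K) ≤ (|K| β / (2π e^{t₀})) Σ_{k=0}^∞ [λ - 1/4 - (2k+1)β]₊⁰, where [ρ]₊⁰ = 1 if ρ > 0 and 0 otherwise. -/
open MeasureTheory Real Filter

noncomputable section

/-- Dirichlet eigenvalue counting function of `q^{A⁰,0}_K` on `L²(K)`. -/
def NK0 (x₀ t₀ a ε₀ b₀ lam : ℝ) : ℕ :=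
  NN (qK0 x₀ t₀ a ε₀ b₀) {w | IsTestOn (Krect x₀ t₀ a ε₀) w}
    (fun w => ∫ p in Krect x₀ t₀ a ε₀, ‖w p‖ ^ 2) lam


lemma int_cc {f : ℝ → ℝ} (hf : Continuous f) (hc : HasCompactSupport f) : Integrable f :=
  hf.integrable_of_hasCompactSupport hc

lemma int_deriv_zero {E : Type*} [NormedAddCommGroup E] [NormedSpace ℝ E] {F F' : ℝ → E} (h : ∀ x, HasDerivAt F (F' x) x) (hF' : Continuous F')
    (hc : HasCompactSupport F) : ∫ x, F' x = 0 := by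
  have e : F' = deriv F := by ext x; exact (h x).deriv.symm
  have hc' : HasCompactSupport F' := by rw [e]; exact hc.deriv
  have hFc : Continuous F := continuous_iff_continuousAt.2 fun x => (h x).continuousAt
  exact integral_eq_zero_of_hasDerivAt_of_integrable h
    (hF'.integrable_of_hasCompactSupport hc') (hFc.integrable_of_hasCompactSupport hc)

lemma aff_deriv (p β x : ℝ) : HasDerivAt (fun t => p + β * t) β x := by
  simpa using ((hasDerivAt_id x).const_mul β).const_add p

lemma phi_deriv (p β x : ℝ) : HasDerivAt (fun t => p * t + β * t ^ 2 / 2) (p + β * x) x := by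
  have := ((hasDerivAt_id x).const_mul p).add ((((hasDerivAt_id x).pow 2).const_mul β).div_const 2)
  refine this.congr_deriv ?_
  simp; ring

lemma c1_facts {f : ℝ → ℝ} (hf : ContDiff ℝ 1 f) :
    Continuous f ∧ Continuous (deriv f) ∧ ∀ x, HasDerivAt f (deriv f x) x :=
  ⟨hf.continuous, hf.continuous_deriv le_rfl,
    fun x => (hf.differentiable one_ne_zero x).hasDerivAt⟩

/-- `∫ 2 a f f' = -β ∫ f²`. -/
lemma cross (p β : ℝ) {f : ℝ → ℝ} (hf : ContDiff ℝ 1 f) (hc : HasCompactSupport f) :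
    ∫ t, (β * f t ^ 2 + (p + β * t) * (2 * f t * deriv f t)) = 0 := by
  obtain ⟨h0, h1, h2⟩ := c1_facts hf
  refine int_deriv_zero (F := fun t => (p + β * t) * f t ^ 2) (fun x => ?_) (by fun_prop) ?_
  · refine ((aff_deriv p β x).mul ((h2 x).pow 2)).congr_deriv ?_
    simp
  · exact HasCompactSupport.mul_left (f := fun t => (p + β * t))
      (hc.comp_left (g := fun y : ℝ => y ^ 2) (by simp))

lemma cs_pair {f g : ℝ → ℝ} (hc : HasCompactSupport f) (hd : HasCompactSupport g)
    (F : ℝ → ℝ → ℝ → ℝ) (hF : ∀ t, F t 0 0 = 0) :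
    HasCompactSupport (fun t => F t (f t) (g t)) := by
  refine HasCompactSupport.of_support_subset_isCompact (hc.isCompact.union hd.isCompact) ?_
  intro t ht
  by_contra hn
  simp only [Set.mem_union, not_or] at hn
  apply ht
  simp [image_eq_zero_of_notMem_tsupport hn.1, image_eq_zero_of_notMem_tsupport hn.2, hF]

lemma int_pair {f g : ℝ → ℝ} (hc : HasCompactSupport f) (hd : HasCompactSupport g)
    (F : ℝ → ℝ → ℝ → ℝ) (hF : ∀ t, F t 0 0 = 0) (hcont : Continuous (fun t => F t (f t) (g t))) :
    Integrable (fun t => F t (f t) (g t)) :=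
  hcont.integrable_of_hasCompactSupport (cs_pair hc hd F hF)

lemma lin3 {f g h F : ℝ → ℝ} (i1 : Integrable f) (i2 : Integrable g) (i3 : Integrable h) (c d : ℝ)
    (hF : ∀ t, F t = f t + c * g t + d * h t) :
    ∫ t, F t = (∫ t, f t) + c * (∫ t, g t) + d * ∫ t, h t := by
  have e : F = fun t => (f t + c * g t) + d * h t := funext hF
  have i12 : Integrable (fun t => f t + c * g t) := i1.add (i2.const_mul c)
  rw [e, integral_add i12 (i3.const_mul d), integral_add i1 (i2.const_mul c),
    integral_const_mul, integral_const_mul]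

lemma annih (p β : ℝ) {f : ℝ → ℝ} (hf : ContDiff ℝ 1 f) (hc : HasCompactSupport f) :
    ∫ t, (deriv f t + (p + β * t) * f t) ^ 2 =
      (∫ t, (deriv f t ^ 2 + (p + β * t) ^ 2 * f t ^ 2)) - β * ∫ t, f t ^ 2 := by
  obtain ⟨h0, h1, h2⟩ := c1_facts hf
  have hx := cross p β hf hc
  have i1 := int_pair hc hc.deriv (fun t x y => y ^ 2 + (p + β * t) ^ 2 * x ^ 2) (by simp)
    (by fun_prop)
  have i2 := int_pair hc hc.deriv (fun t x y => x ^ 2) (by simp) (by fun_prop)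
  have i3 := int_pair hc hc.deriv (fun t x y => β * x ^ 2 + (p + β * t) * (2 * x * y)) (by simp)
    (by fun_prop)
  rw [lin3 i1 i2 i3 (-β) 1 (fun t => by ring), hx]; ring

lemma creat (p β : ℝ) {f : ℝ → ℝ} (hf : ContDiff ℝ 1 f) (hc : HasCompactSupport f) :
    ∫ t, (-deriv f t + (p + β * t) * f t) ^ 2 =
      (∫ t, (deriv f t ^ 2 + (p + β * t) ^ 2 * f t ^ 2)) + β * ∫ t, f t ^ 2 := by
  obtain ⟨h0, h1, h2⟩ := c1_facts hf
  have hx := cross p β hf hc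
  have i1 := int_pair hc hc.deriv (fun t x y => y ^ 2 + (p + β * t) ^ 2 * x ^ 2) (by simp)
    (by fun_prop)
  have i2 := int_pair hc hc.deriv (fun t x y => x ^ 2) (by simp) (by fun_prop)
  have i3 := int_pair hc hc.deriv (fun t x y => β * x ^ 2 + (p + β * t) * (2 * x * y)) (by simp)
    (by fun_prop)
  rw [lin3 i1 i2 i3 β (-1) (fun t => by ring), hx]; ring

/-- adjointness : `∫ (-g' + a g) H = ∫ g (H' + a H)`. -/
lemma adj (p β : ℝ) {g H H' : ℝ → ℝ} (hg : ContDiff ℝ 1 g) (hc : HasCompactSupport g)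
    (hH : ∀ x, HasDerivAt H (H' x) x) (hH' : Continuous H') :
    ∫ t, (-deriv g t + (p + β * t) * g t) * H t = ∫ t, g t * (H' t + (p + β * t) * H t) := by
  obtain ⟨h0, h1, h2⟩ := c1_facts hg
  have hHc : Continuous H := continuous_iff_continuousAt.2 fun x => (hH x).continuousAt
  have hz : ∫ t, (deriv g t * H t + g t * H' t) = 0 :=
    int_deriv_zero (F := fun t => g t * H t) (fun x => (h2 x).mul (hH x)) (by fun_prop)
      hc.mul_right
  have i1 := int_pair hc hc.deriv (fun t x y => (-y + (p + β * t) * x) * H t) (by simp)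
    (by fun_prop)
  have i2 := int_pair hc hc.deriv (fun t x y => y * H t + x * H' t) (by simp)
    (by fun_prop)
  rw [← add_zero (∫ t, (-deriv g t + (p + β * t) * g t) * H t), ← hz, ← integral_add i1 i2]
  congr 1; ext t; ring

lemma oned (p β : ℝ) (hβ : 0 < β) : ∀ M : ℕ, ∃ h : Fin M → ℝ → ℝ, (∀ k, Continuous (h k)) ∧
    ∀ f : ℝ → ℝ, ContDiff ℝ 1 f → HasCompactSupport f → (∀ k, ∫ t, f t * h k t = 0) →
      (2 * M + 1) * β * ∫ t, f t ^ 2 ≤ ∫ t, (deriv f t ^ 2 + (p + β * t) ^ 2 * f t ^ 2) := by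
  intro M
  induction M with
  | zero =>
    refine ⟨fun _ _ => 0, fun _ => continuous_const, fun f hf hc _ => ?_⟩
    have := annih p β hf hc
    have h0 : 0 ≤ ∫ t, (deriv f t + (p + β * t) * f t) ^ 2 := integral_nonneg fun t => sq_nonneg _
    simp only [Nat.cast_zero]
    linarith
  | succ M ih =>
    obtain ⟨h, hh, ih⟩ := ih
    set φ : ℝ → ℝ := fun t => p * t + β * t ^ 2 / 2 with hφ
    have hφd : ∀ x, HasDerivAt φ (p + β * x) x := phi_deriv p β
    have hφc : Continuous φ := by fun_prop
    have hed : ∀ x, HasDerivAt (fun t => exp (φ t)) (exp (φ x) * (p + β * x)) x :=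
      fun x => (hφd x).exp
    have hed' : ∀ x, HasDerivAt (fun t => exp (-φ t)) (exp (-φ x) * (-(p + β * x))) x :=
      fun x => (hφd x).neg.exp
    set G : Fin M → ℝ → ℝ := fun k t => exp (-φ t) * ∫ s in (0:ℝ)..t, exp (φ s) * h k s with hG
    have hGd : ∀ k x, HasDerivAt (G k) (h k x - (p + β * x) * G k x) x := by
      intro k x
      have hcont : Continuous fun s => exp (φ s) * h k s := by have := hh k; fun_prop
      have h1 := (hed' x).mul (hcont.integral_hasStrictDerivAt 0 x).hasDerivAt
      refine h1.congr_deriv ?_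
      have : exp (-φ x) * (exp (φ x) * h k x) = h k x := by
        rw [← mul_assoc, ← exp_add]; simp
      rw [this]; simp only [hG]; ring
    have hGc : ∀ k, Continuous (G k) := fun k =>
      continuous_iff_continuousAt.2 fun x => (hGd k x).continuousAt
    refine ⟨Fin.cons (fun t => exp (-φ t)) G, ?_, ?_⟩
    · intro k
      refine Fin.cases ?_ (fun k => ?_) k
      · simp only [Fin.cons_zero]; fun_prop
      · simpa using hGc k
    intro f hf hc hort
    obtain ⟨hf0, hf1, hf2⟩ := c1_facts hf
    have o0 : ∫ t, f t * exp (-φ t) = 0 := by simpa using hort 0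
    have o1 : ∀ k, ∫ t, f t * G k t = 0 := fun k => by simpa using hort k.succ
    obtain ⟨R, hR0, hR⟩ : ∃ R : ℝ, 0 < R ∧ ∀ t, R < |t| → f t = 0 := by
      obtain ⟨R, hR0, hR⟩ := hc.isCompact.isBounded.subset_closedBall_lt 0 0
      refine ⟨R, hR0, fun t ht => image_eq_zero_of_notMem_tsupport fun hm => ?_⟩
      have := hR hm
      simp at this
      linarith
    have hcont : Continuous fun s => exp (-φ s) * f s := by fun_prop
    set F : ℝ → ℝ := fun t => ∫ s in (-R)..t, exp (-φ s) * f s with hF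
    have hFd : ∀ x, HasDerivAt F (exp (-φ x) * f x) x := fun x =>
      (hcont.integral_hasStrictDerivAt (-R) x).hasDerivAt
    set g : ℝ → ℝ := fun t => -(exp (φ t) * F t) with hg
    have hgd : ∀ x, HasDerivAt g ((p + β * x) * g x - f x) x := by
      intro x
      refine ((hed x).mul (hFd x)).neg.congr_deriv ?_
      have : exp (φ x) * (exp (-φ x) * f x) = f x := by
        rw [← mul_assoc, ← exp_add]; simp
      rw [this]; simp only [hg]; ring
    have hgc : Continuous g := continuous_iff_continuousAt.2 fun x => (hgd x).continuousAt
    have hgd' : deriv g = fun x => (p + β * x) * g x - f x := by ext x; exact (hgd x).deriv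
    have hg1 : ContDiff ℝ 1 g := by
      rw [contDiff_one_iff_deriv]
      refine ⟨fun x => (hgd x).differentiableAt, ?_⟩
      rw [hgd']; fun_prop
    have hF0 : ∀ t, R < |t| → F t = 0 := by
      intro t ht
      have hz : ∀ s, R < |s| → exp (-φ s) * f s = 0 := fun s hs => by rw [hR s hs, mul_zero]
      rcases lt_abs.1 ht with h1 | h1
      · have : F t = ∫ s, exp (-φ s) * f s := by
          simp only [hF]
          rw [intervalIntegral.integral_of_le (by linarith)]
          apply setIntegral_eq_integral_of_ae_compl_eq_zero
          have hne : ∀ᵐ s : ℝ, s ≠ -R := by simp [ae_iff, measure_singleton]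
          filter_upwards [hne] with s hsne hs
          apply hz
          simp only [Set.mem_Ioc, not_and_or, not_lt, not_le] at hs
          rcases hs with hs | hs
          · have := lt_of_le_of_ne hs hsne
            rw [lt_abs]; right; linarith
          · rw [lt_abs]; left; linarith
        rw [this, ← o0]; congr 1; ext s; ring
      · simp only [hF]
        rw [intervalIntegral.integral_symm, intervalIntegral.integral_of_le (by linarith), neg_eq_zero]
        apply integral_eq_zero_of_ae
        have hne : ∀ᵐ s : ℝ, s ≠ -R := by simp [ae_iff, measure_singleton]
        rw [EventuallyEq, ae_restrict_iff' measurableSet_Ioc]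
        filter_upwards [hne] with s hsne hs
        apply hz
        have := lt_of_le_of_ne hs.2 hsne
        rw [lt_abs]; right; linarith
    have hgcs : HasCompactSupport g := by
      refine HasCompactSupport.of_support_subset_isCompact (isCompact_Icc (a := -R) (b := R)) ?_
      intro t ht
      by_contra hn
      apply ht
      have : R < |t| := by
        by_contra hh; push Not at hh
        exact hn (abs_le.1 hh)
      simp [hg, hF0 t this]
    have hfg : ∀ t, -deriv g t + (p + β * t) * g t = f t := by
      intro t; rw [hgd']; ring
    have hE := ih g hg1 hgcs (fun k => by
      have := adj p β hg1 hgcs (hGd k) (by have := hh k; have := hGc k; fun_prop)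
      simp only [hfg] at this
      rw [o1 k] at this
      rw [this]; congr 1; ext t; ring)
    have e1 := creat p β hg1 hgcs
    simp only [hfg] at e1
    have e2 := adj p β hg1 hgcs hf2 hf1
    simp only [hfg] at e2
    have e3 := annih p β hf hc
    set c : ℝ := (2 * M + 2) * β with hcdef
    have hcpos : 0 < c := by positivity
    have hnn : 0 ≤ ∫ t, ((deriv f t + (p + β * t) * f t) - c * g t) ^ 2 :=
      integral_nonneg fun t => sq_nonneg _
    have j1 := int_pair hc hc.deriv (fun t x y => (y + (p + β * t) * x) ^ 2) (by simp)
      (by fun_prop)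
    have j2 := int_pair hgcs hgcs (fun t x y => x ^ 2) (by simp) (by fun_prop)
    have j3 := int_pair hgcs hgcs (fun t x y => x * (deriv f t + (p + β * t) * f t)) (by simp)
      (by fun_prop)
    have exp1 : ∫ t, ((deriv f t + (p + β * t) * f t) - c * g t) ^ 2 =
        (∫ t, (deriv f t + (p + β * t) * f t) ^ 2) - 2 * c * (∫ t, f t * f t)
          + c ^ 2 * ∫ t, g t ^ 2 := by
      rw [e2, lin3 j1 j3 j2 (-(2 * c)) (c ^ 2) (fun t => by ring)]; ring
    have sq : ∫ t, f t * f t = ∫ t, f t ^ 2 := by congr 1; ext t; ring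
    rw [sq] at exp1
    have key : c * ∫ t, g t ^ 2 ≤ ∫ t, f t ^ 2 := by
      rw [e1, hcdef]; linarith
    have key2 := mul_le_mul_of_nonneg_left key hcpos.le
    push_cast
    have : (2 * ((M:ℝ) + 1) + 1) * β = c + β := by rw [hcdef]; ring
    rw [this]
    nlinarith


lemma oned_c (p b : ℝ) (hb : b ≠ 0) (M : ℕ) : ∃ h : Fin M → ℝ → ℝ, (∀ k, Continuous (h k)) ∧
    ∀ f : ℝ → ℂ, ContDiff ℝ 1 f → HasCompactSupport f → (∀ k, ∫ t, f t * (h k t : ℂ) = 0) →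
      (2 * M + 1) * |b| * ∫ t, ‖f t‖ ^ 2 ≤ ∫ t, (‖deriv f t‖ ^ 2 + (p + b * t) ^ 2 * ‖f t‖ ^ 2) := by
  obtain ⟨p', hp'⟩ : ∃ p' : ℝ, ∀ t, (p + b * t) ^ 2 = (p' + |b| * t) ^ 2 := by
    rcases lt_or_gt_of_ne hb with h | h
    · refine ⟨-p, fun t => ?_⟩
      rw [abs_of_neg h]; ring
    · refine ⟨p, fun t => ?_⟩
      rw [abs_of_pos h]
  obtain ⟨h, hh, H⟩ := oned p' |b| (abs_pos.2 hb) M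
  refine ⟨h, hh, fun f hf hc ho => ?_⟩
  have hfd : ∀ x, HasDerivAt f (deriv f x) x :=
    fun x => (hf.differentiable one_ne_zero x).hasDerivAt
  have hf0 := hf.continuous
  have hf1 : Continuous (deriv f) := hf.continuous_deriv le_rfl
  have hint : ∀ k, Integrable (fun t => f t * (h k t : ℂ)) := fun k => by
    have := hh k
    exact (by fun_prop : Continuous fun t => f t * (h k t : ℂ)).integrable_of_hasCompactSupport
      hc.mul_right
  have r1 : ContDiff ℝ 1 (fun t => (f t).re) := Complex.reCLM.contDiff.comp hf
  have r2 : ContDiff ℝ 1 (fun t => (f t).im) := Complex.imCLM.contDiff.comp hf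
  have c1 : HasCompactSupport (fun t => (f t).re) := hc.comp_left (g := Complex.re) rfl
  have c2 : HasCompactSupport (fun t => (f t).im) := hc.comp_left (g := Complex.im) rfl
  have d1 : deriv (fun t => (f t).re) = fun t => (deriv f t).re := by
    ext t; exact (Complex.reCLM.hasFDerivAt.comp_hasDerivAt t (hfd t)).deriv
  have d2 : deriv (fun t => (f t).im) = fun t => (deriv f t).im := by
    ext t; exact (Complex.imCLM.hasFDerivAt.comp_hasDerivAt t (hfd t)).deriv
  have o1 : ∀ k, ∫ t, (f t).re * h k t = 0 := fun k => by
    have := Complex.reCLM.integral_comp_comm (hint k)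
    rw [ho k] at this
    simpa using this
  have o2 : ∀ k, ∫ t, (f t).im * h k t = 0 := fun k => by
    have := Complex.imCLM.integral_comp_comm (hint k)
    rw [ho k] at this
    simpa using this
  have E1 := H _ r1 c1 o1
  have E2 := H _ r2 c2 o2
  have k1 := int_pair c1 c1.deriv (fun t x y => x ^ 2) (by simp) (by have := r1.continuous; fun_prop)
  have k2 := int_pair c2 c2.deriv (fun t x y => x ^ 2) (by simp) (by have := r2.continuous; fun_prop)
  have m1 := int_pair c1 c1.deriv (fun t x y => y ^ 2 + (p' + |b| * t) ^ 2 * x ^ 2) (by simp)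
    (by have := r1.continuous; have := r1.continuous_deriv le_rfl; fun_prop)
  have m2 := int_pair c2 c2.deriv (fun t x y => y ^ 2 + (p' + |b| * t) ^ 2 * x ^ 2) (by simp)
    (by have := r2.continuous; have := r2.continuous_deriv le_rfl; fun_prop)
  have nsq : ∀ z : ℂ, ‖z‖ ^ 2 = z.re ^ 2 + z.im ^ 2 := fun z => by
    rw [← Complex.normSq_eq_norm_sq, Complex.normSq_apply]; ring
  have s1 : ∫ t, ‖f t‖ ^ 2 = (∫ t, (f t).re ^ 2) + ∫ t, (f t).im ^ 2 := by
    rw [← integral_add k1 k2]; congr 1; ext t; exact nsq _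
  have s2 : ∫ t, (‖deriv f t‖ ^ 2 + (p + b * t) ^ 2 * ‖f t‖ ^ 2) =
      (∫ t, (deriv (fun t => (f t).re) t ^ 2 + (p' + |b| * t) ^ 2 * (f t).re ^ 2)) +
       ∫ t, (deriv (fun t => (f t).im) t ^ 2 + (p' + |b| * t) ^ 2 * (f t).im ^ 2) := by
    rw [← integral_add m1 m2]; congr 1; ext t; rw [nsq, nsq, hp', d1, d2]; ring
  rw [s1, s2]; linarith

lemma norm_sq_disj {N : ℕ} (z : Fin N → ℂ) (hz : ∀ c d, c ≠ d → z c = 0 ∨ z d = 0) :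
    ‖∑ c, z c‖ ^ 2 = ∑ c, ‖z c‖ ^ 2 := by
  by_cases h : ∃ c, z c ≠ 0
  · obtain ⟨c, hc⟩ := h
    have h0 : ∀ d, d ≠ c → z d = 0 := fun d hd => (hz d c hd).resolve_right hc
    rw [Finset.sum_eq_single c (fun d _ hd => h0 d hd) (by simp),
      Finset.sum_eq_single c (fun d _ hd => by simp [h0 d hd]) (by simp)]
  · push Not at h
    simp [h]

lemma glue (p b : ℝ) (hb : b ≠ 0) (M : ℕ) (T0 T1 : ℝ) (hT : T0 < T1) :
    ∃ h : Fin M → ℝ → ℝ, (∀ k, Continuous (h k)) ∧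
    ∀ (N : ℕ) (g : Fin N → ℝ → ℂ), (∀ c, ContDiff ℝ 1 (g c)) → (∀ c, HasCompactSupport (g c)) →
     (∀ c, tsupport (g c) ⊆ Set.Ioo T0 T1) →
     (∀ k, ∑ c : Fin N, ∫ t, g c t * (h k (t + (c:ℝ) * (T1 - T0)) : ℂ) = 0) →
      (2 * M + 1) * |b| * ∑ c, ∫ t, ‖g c t‖ ^ 2 ≤
        ∑ c : Fin N, ∫ t, (‖deriv (g c) t‖ ^ 2 + (p + b * (t + (c:ℝ) * (T1 - T0))) ^ 2 * ‖g c t‖ ^ 2) := by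
  obtain ⟨h, hh, H⟩ := oned_c p b hb M
  refine ⟨h, hh, fun N g hg hc hs ho => ?_⟩
  set L := T1 - T0 with hL
  set G : Fin N → ℝ → ℂ := fun c t => g c (t - c * L) with hG
  have hGd : ∀ c x, HasDerivAt (G c) (deriv (g c) (x - c * L)) x := fun c x => by
    exact ((hg c).differentiable one_ne_zero (x - c * L)).hasDerivAt.comp_sub_const x (c * L : ℝ)
  have hG1 : ∀ c, ContDiff ℝ 1 (G c) := fun c => (hg c).comp (contDiff_id.sub contDiff_const)
  have hGc : ∀ c, HasCompactSupport (G c) := fun c =>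
    (hc c).comp_homeomorph (Homeomorph.subRight ((c:ℝ) * L))
  have z0 : ∀ c t, t ∉ Set.Ioo T0 T1 → g c t = 0 := fun c t ht =>
    image_eq_zero_of_notMem_tsupport fun hm => ht (hs c hm)
  have z1 : ∀ c t, t ∉ Set.Ioo T0 T1 → deriv (g c) t = 0 := fun c t ht =>
    image_eq_zero_of_notMem_tsupport fun hm =>
      ht (hs c (closure_minimal support_deriv_subset (isClosed_tsupport _) hm))
  have disj : ∀ (c d : Fin N) t, c ≠ d → t - c * L ∉ Set.Ioo T0 T1 ∨ t - d * L ∉ Set.Ioo T0 T1 := by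
    have aux : ∀ (c d : Fin N) t, c < d → t - c * L ∉ Set.Ioo T0 T1 ∨ t - d * L ∉ Set.Ioo T0 T1 := by
      intro c d t hcd
      by_contra! hn
      obtain ⟨h1, h2⟩ := hn
      have h3 : ((c:ℕ):ℝ) + 1 ≤ ((d:ℕ):ℝ) := by exact_mod_cast hcd
      have h4 : 0 < L := by rw [hL]; linarith
      have := mul_le_mul_of_nonneg_right h3 h4.le
      have := h1.2; have := h2.1
      nlinarith
    intro c d t hcd
    rcases lt_or_gt_of_ne hcd with h | h
    · exact aux c d t h
    · exact (aux d c t h).symm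
  have hfc : HasCompactSupport (fun t => ∑ c, G c t) := by
    refine HasCompactSupport.of_support_subset_isCompact
      (isCompact_iUnion fun c => (hGc c).isCompact) ?_
    intro t ht
    by_contra hn
    simp only [Set.mem_iUnion, not_exists] at hn
    apply ht
    exact Finset.sum_eq_zero fun c _ => image_eq_zero_of_notMem_tsupport (hn c)
  have hfd : deriv (fun t => ∑ c, G c t) = fun t => ∑ c : Fin N, deriv (g c) (t - c * L) := by
    ext t
    exact (HasDerivAt.fun_sum fun c _ => hGd c t).deriv
  have key := H (fun t => ∑ c, G c t) (ContDiff.sum fun c _ => hG1 c) hfc (fun k => by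
    rw [← ho k]
    simp only [Finset.sum_mul]
    rw [integral_finsetSum _ (fun c _ => by
      have := hh k; have := (hG1 c).continuous
      exact (by fun_prop : Continuous fun t => G c t * (h k t : ℂ)).integrable_of_hasCompactSupport
        (hGc c).mul_right)]
    refine Finset.sum_congr rfl fun c _ => ?_
    rw [← integral_add_right_eq_self (fun t => G c t * (h k t : ℂ)) ((c:ℝ) * L)]
    simp [hG])
  have n1 : ∫ t, ‖∑ c, G c t‖ ^ 2 = ∑ c, ∫ t, ‖g c t‖ ^ 2 := by
    have : (fun t => ‖∑ c, G c t‖ ^ 2) = fun t => ∑ c, ‖G c t‖ ^ 2 := by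
      ext t
      exact norm_sq_disj _ fun c d hcd => (disj c d t hcd).imp (z0 _ _) (z0 _ _)
    rw [this, integral_finsetSum _ (fun c _ => by
      have := (hG1 c).continuous
      exact (by fun_prop : Continuous fun t => ‖G c t‖ ^ 2).integrable_of_hasCompactSupport
        ((hGc c).comp_left (g := fun z => ‖z‖ ^ 2) (by simp)))]
    refine Finset.sum_congr rfl fun c _ => ?_
    rw [← integral_add_right_eq_self (fun t => ‖G c t‖ ^ 2) ((c:ℝ) * L)]
    simp [hG]
  have n2 : ∫ t, (‖deriv (fun t => ∑ c, G c t) t‖ ^ 2 + (p + b * t) ^ 2 * ‖∑ c, G c t‖ ^ 2) =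
      ∑ c : Fin N, ∫ t, (‖deriv (g c) t‖ ^ 2 + (p + b * (t + (c:ℝ) * L)) ^ 2 * ‖g c t‖ ^ 2) := by
    have : (fun t => (‖deriv (fun t => ∑ c, G c t) t‖ ^ 2 + (p + b * t) ^ 2 * ‖∑ c, G c t‖ ^ 2)) =
        fun t => ∑ c : Fin N, (‖deriv (g c) (t - c * L)‖ ^ 2 + (p + b * t) ^ 2 * ‖g c (t - c * L)‖ ^ 2) := by
      ext t
      rw [hfd, norm_sq_disj _ fun c d hcd => (disj c d t hcd).imp (z1 _ _) (z1 _ _),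
        norm_sq_disj _ fun c d hcd => (disj c d t hcd).imp (z0 _ _) (z0 _ _),
        Finset.mul_sum, Finset.sum_add_distrib]
    rw [this, integral_finsetSum _ (fun c _ => by
      have := (hg c).continuous
      have := (hg c).continuous_deriv le_rfl
      refine (by fun_prop : Continuous fun t => (‖deriv (g c) (t - c * L)‖ ^ 2 + (p + b * t) ^ 2 * ‖g c (t - c * L)‖ ^ 2)).integrable_of_hasCompactSupport ?_
      refine HasCompactSupport.of_support_subset_isCompact (hGc c).isCompact ?_
      intro t ht
      by_contra hn
      apply ht
      have e1 : g c (t - c * L) = 0 := by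
        change G c t = 0
        exact image_eq_zero_of_notMem_tsupport hn
      have e2 : deriv (g c) (t - c * L) = 0 := by
        rw [← (hGd c t).deriv]
        exact image_eq_zero_of_notMem_tsupport fun hm =>
          hn (closure_minimal support_deriv_subset (isClosed_tsupport _) hm)
      simp [e1, e2])]
    refine Finset.sum_congr rfl fun c _ => ?_
    rw [← integral_add_right_eq_self (fun t => (‖deriv (g c) (t - c * L)‖ ^ 2 + (p + b * t) ^ 2 * ‖g c (t - c * L)‖ ^ 2)) ((c:ℝ) * L)]
    simp
  rw [n1, n2] at key
  exact key

lemma parseval (xl xr θ : ℝ) (hx : xl < xr) (v : ℝ → ℂ) (hv : Continuous v) :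
    HasSum (fun j : ℤ => ‖∫ x in xl..xr,
      Complex.exp (-Complex.I * ((2 * π * j / (xr - xl) - θ : ℝ) : ℂ) * (x : ℂ)) * v x‖ ^ 2)
      ((xr - xl) * ∫ x in xl..xr, ‖v x‖ ^ 2) := by
  have hl : 0 < xr - xl := by linarith
  set f : ℝ → ℂ := fun x => Complex.exp (Complex.I * θ * x) * v x with hf
  have hfc : Continuous f := by fun_prop
  have hL2 : MemLp f 2 (volume.restrict (Set.Ioc xl xr)) := by
    rw [memLp_two_iff_integrable_sq_norm hfc.aestronglyMeasurable]
    exact ((hfc.norm.pow 2).continuousOn.integrableOn_compact isCompact_Icc).mono_set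
      Set.Ioc_subset_Icc_self
  have key := (hasSum_sq_fourierCoeffOn hx hL2).mul_left ((xr - xl) ^ 2)
  have e1 : ∀ j : ℤ, ‖∫ x in xl..xr, Complex.exp (-Complex.I * ((2 * π * j / (xr - xl) - θ : ℝ) : ℂ) * (x : ℂ)) * v x‖ ^ 2 =
      (xr - xl) ^ 2 * ‖fourierCoeffOn hx f j‖ ^ 2 := by
    intro j
    rw [fourierCoeffOn_eq_integral, norm_smul, mul_pow]
    have : (xr - xl) ^ 2 * (‖1 / (xr - xl)‖ ^ 2 * ‖∫ x in xl..xr, fourier (-j) (x : AddCircle (xr - xl)) • f x‖ ^ 2)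
        = ‖∫ x in xl..xr, fourier (-j) (x : AddCircle (xr - xl)) • f x‖ ^ 2 := by
      rw [Real.norm_of_nonneg (by positivity)]; field_simp
    rw [this]
    congr 2
    refine intervalIntegral.integral_congr fun x _ => ?_
    simp only [hf, fourier_coe_apply, smul_eq_mul]
    rw [← mul_assoc, ← Complex.exp_add]
    congr 2
    push_cast
    ring
  have e2 : (xr - xl) * ∫ x in xl..xr, ‖v x‖ ^ 2 = (xr - xl) ^ 2 * ((xr - xl)⁻¹ • ∫ x in xl..xr, ‖f x‖ ^ 2) := by
    have : ∀ x, ‖f x‖ = ‖v x‖ := fun x => by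
      simp only [hf, norm_mul]
      rw [show Complex.I * θ * x = ((θ * x : ℝ) : ℂ) * Complex.I by push_cast; ring,
        Complex.norm_exp_ofReal_mul_I, one_mul]
    simp only [this, smul_eq_mul]
    field_simp
  simp only [e1]
  rw [e2]
  exact key


lemma int_nsq1 {v : ℝ → ℂ} (hv : Continuous v) (hc : HasCompactSupport v) :
    Integrable (fun t => ‖v t‖ ^ 2) := by
  have h1 : Continuous fun t => ‖v t‖ ^ 2 := by fun_prop
  have h2 : HasCompactSupport fun t => ‖v t‖ ^ 2 := by
    refine HasCompactSupport.of_support_subset_isCompact hc.isCompact ?_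
    intro t ht
    by_contra hn
    exact ht (by simp [image_eq_zero_of_notMem_tsupport hn])
  exact h1.integrable_of_hasCompactSupport h2

lemma int_nsq2 {v : ℝ × ℝ → ℂ} (hv : Continuous v) (hc : HasCompactSupport v) :
    Integrable (fun t => ‖v t‖ ^ 2) (volume : Measure (ℝ × ℝ)) := by
  have h1 : Continuous fun t => ‖v t‖ ^ 2 := by fun_prop
  have h2 : HasCompactSupport fun t => ‖v t‖ ^ 2 := by
    refine HasCompactSupport.of_support_subset_isCompact hc.isCompact ?_
    intro t ht
    by_contra hn
    exact ht (by simp [image_eq_zero_of_notMem_tsupport hn])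
  exact h1.integrable_of_hasCompactSupport h2

/-- partial Fourier transform in `x` -/
def GG (xl xr : ℝ) (v : ℝ × ℝ → ℂ) (η t : ℝ) : ℂ :=
  ∫ x in xl..xr, Complex.exp (-Complex.I * (η : ℂ) * (x : ℂ)) * v (x, t)

lemma GG_cont (xl xr η : ℝ) {v : ℝ × ℝ → ℂ} (hv : Continuous v) : Continuous (GG xl xr v η) := by
  unfold GG
  apply intervalIntegral.continuous_parametric_intervalIntegral_of_continuous'
  fun_prop

lemma GG_tsupport (xl xr η : ℝ) {v : ℝ × ℝ → ℂ} (hc : HasCompactSupport v) :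
    tsupport (GG xl xr v η) ⊆ Prod.snd '' tsupport v := by
  refine closure_minimal ?_ (hc.isCompact.image continuous_snd).isClosed
  intro t ht
  by_contra hn
  apply ht
  unfold GG
  have : ∀ x, v (x, t) = 0 := fun x =>
    image_eq_zero_of_notMem_tsupport fun hm => hn ⟨_, hm, rfl⟩
  simp [this]

lemma GG_cs (xl xr η : ℝ) {v : ℝ × ℝ → ℂ} (hc : HasCompactSupport v) :
    HasCompactSupport (GG xl xr v η) :=
  (hc.isCompact.image continuous_snd).of_isClosed_subset (isClosed_tsupport _)
    (GG_tsupport xl xr η hc)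

lemma slice_int (xl xr tl tr : ℝ) (hx : xl < xr) {v : ℝ × ℝ → ℂ} (hv : Continuous v)
    (hc : HasCompactSupport v) (hs : tsupport v ⊆ Set.Ioo xl xr ×ˢ Set.Ioo tl tr) :
    Integrable (fun t => ∫ x in xl..xr, ‖v (x, t)‖ ^ 2) ∧
    ∫ t, (∫ x in xl..xr, ‖v (x, t)‖ ^ 2) = ∫ q in Set.Ioo xl xr ×ˢ Set.Ioo tl tr, ‖v q‖ ^ 2 := by
  have z : ∀ q, q ∉ Set.Ioo xl xr ×ˢ Set.Ioo tl tr → v q = 0 := fun q hq =>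
    image_eq_zero_of_notMem_tsupport fun hm => hq (hs hm)
  have hint : Integrable (fun q => ‖v q‖ ^ 2) (volume : Measure (ℝ × ℝ)) :=
    int_nsq2 hv hc
  have e : ∀ t, ∫ x in xl..xr, ‖v (x, t)‖ ^ 2 = ∫ x, ‖v (x, t)‖ ^ 2 := by
    intro t
    rw [intervalIntegral.integral_of_le hx.le]
    apply setIntegral_eq_integral_of_forall_compl_eq_zero
    intro x hxn
    rw [z _ (fun hm => hxn (Set.Ioo_subset_Ioc_self hm.1))]; simp
  have hint' : Integrable (fun q : ℝ × ℝ => ‖v q‖ ^ 2) ((volume : Measure ℝ).prod volume) := hint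
  constructor
  · simp only [e]
    exact hint'.integral_prod_right
  · simp only [e]
    rw [setIntegral_eq_integral_of_forall_compl_eq_zero (fun q hq => by rw [z q hq]; simp)]
    exact (integral_prod_symm _ hint').symm

lemma GG_parseval (xl xr tl tr θ : ℝ) (hx : xl < xr) {v : ℝ × ℝ → ℂ} (hv : Continuous v)
    (hc : HasCompactSupport v) (hs : tsupport v ⊆ Set.Ioo xl xr ×ˢ Set.Ioo tl tr) :
    HasSum (fun j : ℤ => ∫ t, ‖GG xl xr v (2 * π * j / (xr - xl) - θ) t‖ ^ 2)
      ((xr - xl) * ∫ q in Set.Ioo xl xr ×ˢ Set.Ioo tl tr, ‖v q‖ ^ 2) := by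
  obtain ⟨i1, i2⟩ := slice_int xl xr tl tr hx hv hc hs
  set F : ℤ → ℝ → ℝ := fun j t => ‖GG xl xr v (2 * π * j / (xr - xl) - θ) t‖ ^ 2 with hF
  have hp : ∀ t, HasSum (fun j => F j t) ((xr - xl) * ∫ x in xl..xr, ‖v (x, t)‖ ^ 2) := fun t =>
    parseval xl xr θ hx (fun x => v (x, t)) (by fun_prop)
  have hFi : ∀ j, Integrable (F j) := fun j =>
    int_nsq1 (GG_cont xl xr _ hv) (GG_cs xl xr _ hc)
  have hF0 : ∀ j t, 0 ≤ F j t := fun j t => by positivity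
  have hsum : Summable fun j => ∫ t, ‖F j t‖ := by
    refine summable_of_sum_le (c := ∫ t, (xr - xl) * ∫ x in xl..xr, ‖v (x, t)‖ ^ 2)
      (fun j => integral_nonneg fun t => norm_nonneg _) (fun s => ?_)
    rw [← integral_finsetSum _ (fun j _ => (hFi j).norm)]
    refine integral_mono (integrable_finsetSum _ fun j _ => (hFi j).norm) (i1.const_mul _) ?_
    intro t
    simp only [Real.norm_of_nonneg (hF0 _ _)]
    exact sum_le_hasSum s (fun j _ => hF0 j t) (hp t)
  have := hasSum_integral_of_summable_integral_norm hFi hsum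
  simp only [(hp _).tsum_eq] at this
  rw [integral_const_mul, i2] at this
  exact this

lemma tsupport_dX (u : ℝ × ℝ → ℂ) : tsupport (dX u) ⊆ tsupport u := by
  refine closure_minimal ?_ (isClosed_tsupport _)
  intro q hq
  refine support_fderiv_subset ℝ fun h0 => hq ?_
  simp [dX, h0]

lemma tsupport_dY (u : ℝ × ℝ → ℂ) : tsupport (dY u) ⊆ tsupport u := by
  refine closure_minimal ?_ (isClosed_tsupport _)
  intro q hq
  refine support_fderiv_subset ℝ fun h0 => hq ?_
  simp [dY, h0]

lemma dX_cont {u : ℝ × ℝ → ℂ} (hu : ContDiff ℝ 1 u) : Continuous (dX u) :=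
  (hu.continuous_fderiv one_ne_zero).clm_apply continuous_const

lemma dY_cont {u : ℝ × ℝ → ℂ} (hu : ContDiff ℝ 1 u) : Continuous (dY u) :=
  (hu.continuous_fderiv one_ne_zero).clm_apply continuous_const

lemma dX_deriv {u : ℝ × ℝ → ℂ} (hu : ContDiff ℝ 1 u) (x t : ℝ) :
    HasDerivAt (fun x => u (x, t)) (dX u (x, t)) x :=
  ((hu.differentiable one_ne_zero (x, t)).hasFDerivAt).comp_hasDerivAt x
    ((hasDerivAt_id x).prodMk (hasDerivAt_const x t))

lemma dY_deriv {u : ℝ × ℝ → ℂ} (hu : ContDiff ℝ 1 u) (x t : ℝ) :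
    HasDerivAt (fun t => u (x, t)) (dY u (x, t)) t :=
  ((hu.differentiable one_ne_zero (x, t)).hasFDerivAt).comp_hasDerivAt t
    ((hasDerivAt_const t x).prodMk (hasDerivAt_id t))

lemma nexp (η x : ℝ) : ‖Complex.exp (-Complex.I * (η : ℂ) * (x : ℂ))‖ = 1 := by
  rw [show -Complex.I * (η : ℂ) * (x : ℂ) = ((-(η * x) : ℝ) : ℂ) * Complex.I by push_cast; ring,
        Complex.norm_exp_ofReal_mul_I]

lemma GG_deriv (xl xr η : ℝ) {u : ℝ × ℝ → ℂ} (hu : ContDiff ℝ 1 u) (hc : HasCompactSupport u)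
    (t : ℝ) : HasDerivAt (GG xl xr u η) (GG xl xr (dY u) η t) t := by
  have hc' : HasCompactSupport (dY u) :=
    hc.isCompact.of_isClosed_subset (isClosed_tsupport _) (tsupport_dY u)
  have hu0 := hu.continuous
  have hd := dY_cont hu
  obtain ⟨C, hC⟩ := hd.bounded_above_of_compact_support hc'
  unfold GG
  refine (intervalIntegral.hasDerivAt_integral_of_dominated_loc_of_deriv_le
    (F := fun t x => Complex.exp (-Complex.I * (η : ℂ) * (x : ℂ)) * u (x, t))
    (F' := fun t x => Complex.exp (-Complex.I * (η : ℂ) * (x : ℂ)) * dY u (x, t))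
    (bound := fun _ => C) (s := Set.univ) univ_mem ?_ ?_ ?_ ?_ ?_ ?_).2
  · exact Eventually.of_forall fun t =>
      (by fun_prop : Continuous fun x : ℝ => Complex.exp (-Complex.I * (η : ℂ) * (x : ℂ)) * u (x, t)).aestronglyMeasurable
  · exact (by fun_prop : Continuous fun x : ℝ => Complex.exp (-Complex.I * (η : ℂ) * (x : ℂ)) * u (x, t)).intervalIntegrable _ _
  · exact (by fun_prop : Continuous fun x : ℝ => Complex.exp (-Complex.I * (η : ℂ) * (x : ℂ)) * dY u (x, t)).aestronglyMeasurable
  · refine Eventually.of_forall fun x _ s _ => ?_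
    rw [norm_mul, nexp, one_mul]; exact hC _
  · exact continuous_const.intervalIntegrable _ _
  · exact Eventually.of_forall fun x _ s _ => (dY_deriv hu x s).const_mul _

lemma GG_C1 (xl xr η : ℝ) {u : ℝ × ℝ → ℂ} (hu : ContDiff ℝ 1 u) (hc : HasCompactSupport u) :
    ContDiff ℝ 1 (GG xl xr u η) := by
  rw [contDiff_one_iff_deriv]
  refine ⟨fun t => (GG_deriv xl xr η hu hc t).differentiableAt, ?_⟩
  rw [show deriv (GG xl xr u η) = GG xl xr (dY u) η from
    funext fun t => (GG_deriv xl xr η hu hc t).deriv]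
  exact GG_cont xl xr η (dY_cont hu)

lemma GG_dx (xl xr tl tr η t : ℝ) {u : ℝ × ℝ → ℂ} (hu : ContDiff ℝ 1 u)
    (hs : tsupport u ⊆ Set.Ioo xl xr ×ˢ Set.Ioo tl tr) :
    GG xl xr (dX u) η t = Complex.I * η * GG xl xr u η t := by
  have z : ∀ q, q ∉ Set.Ioo xl xr ×ˢ Set.Ioo tl tr → u q = 0 := fun q hq =>
    image_eq_zero_of_notMem_tsupport fun hm => hq (hs hm)
  have hu0 := hu.continuous
  have hd := dX_cont hu
  have e0 : ∀ x : ℝ, HasDerivAt (fun x : ℝ => Complex.exp (-Complex.I * (η : ℂ) * (x : ℂ)))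
      (Complex.exp (-Complex.I * (η : ℂ) * (x : ℂ)) * (-Complex.I * η)) x := fun x => by
    have := ((Complex.ofRealCLM.hasDerivAt (x := x)).const_mul (-Complex.I * (η : ℂ))).cexp
    simpa using this
  have key := intervalIntegral.integral_eq_sub_of_hasDerivAt (a := xl) (b := xr)
    (fun x _ => (e0 x).mul (dX_deriv hu x t))
    ((by fun_prop : Continuous fun x : ℝ =>
      Complex.exp (-Complex.I * (η : ℂ) * (x : ℂ)) * (-Complex.I * η) * u (x, t) +
        Complex.exp (-Complex.I * (η : ℂ) * (x : ℂ)) * dX u (x, t)).intervalIntegrable _ _)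
  have z1 : u (xr, t) = 0 := z _ (by simp)
  have z2 : u (xl, t) = 0 := z _ (by simp)
  rw [intervalIntegral.integral_add
    ((by fun_prop : Continuous fun x : ℝ =>
      Complex.exp (-Complex.I * (η : ℂ) * (x : ℂ)) * (-Complex.I * η) * u (x, t)).intervalIntegrable _ _)
    ((by fun_prop : Continuous fun x : ℝ =>
        Complex.exp (-Complex.I * (η : ℂ) * (x : ℂ)) * dX u (x, t)).intervalIntegrable _ _)] at key
  simp only [Pi.mul_apply, z1, z2, mul_zero, sub_zero] at key
  unfold GG
  rw [← intervalIntegral.integral_const_mul]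
  have e3 : ∫ x in xl..xr, Complex.exp (-Complex.I * (η : ℂ) * (x : ℂ)) * (-Complex.I * η) * u (x, t)
      = -∫ x in xl..xr, Complex.I * η * (Complex.exp (-Complex.I * (η : ℂ) * (x : ℂ)) * u (x, t)) := by
    rw [← intervalIntegral.integral_neg]
    congr 1; ext x; ring
  rw [e3] at key
  linear_combination key

lemma GG_smul_add (xl xr η t : ℝ) {u v : ℝ × ℝ → ℂ} (hu : Continuous u) (hv : Continuous v)
    (c d : ℂ) :
    GG xl xr (fun q => c * u q + d * v q) η t = c * GG xl xr u η t + d * GG xl xr v η t := by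
  unfold GG
  rw [← intervalIntegral.integral_const_mul, ← intervalIntegral.integral_const_mul,
    ← intervalIntegral.integral_add
      ((by fun_prop : Continuous fun x : ℝ => _).intervalIntegrable _ _)
      ((by fun_prop : Continuous fun x : ℝ => _).intervalIntegrable _ _)]
  congr 1; ext x; ring

/-- Both sides of the energy identity for one test function. -/
lemma energy (x₀ t₀ a ε₀ b₀ θ : ℝ) (ha : 0 < a) (hε : 0 < ε₀) {u : ℝ × ℝ → ℂ}
    (hu : IsTestOn (Krect x₀ t₀ a ε₀) u) (xl xr : ℝ)
    (hxl : xl = x₀ - ε₀ * a * Real.exp t₀ / 2) (hxr : xr = x₀ + ε₀ * a * Real.exp t₀ / 2) :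
    HasSum (fun j : ℤ => ∫ t, (‖deriv (GG xl xr u (2 * π * j / (xr - xl) - θ)) t‖ ^ 2 +
      (exp t₀ * (2 * π * j / (xr - xl) - θ) + b₀ * (t - t₀)) ^ 2 *
        ‖GG xl xr u (2 * π * j / (xr - xl) - θ) t‖ ^ 2))
      ((xr - xl) * (qK0 x₀ t₀ a ε₀ b₀ u - 1 / 4 * ∫ q in Krect x₀ t₀ a ε₀, ‖u q‖ ^ 2)) := by
  obtain ⟨hu1, hc, hs⟩ := hu
  have hu1 : ContDiff ℝ 1 u := hu1.of_le (by exact_mod_cast le_top)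
  have hx : xl < xr := by
    rw [hxl, hxr]
    have : 0 < ε₀ * a * Real.exp t₀ := by positivity
    linarith
  have hK : Krect x₀ t₀ a ε₀ = Set.Ioo xl xr ×ˢ Set.Ioo (t₀ - ε₀ / 2) (t₀ + ε₀ / 2) := by
    rw [hxl, hxr]; rfl
  rw [hK] at hs
  have hu0 := hu1.continuous
  have hdx := dX_cont hu1
  have hdy := dY_cont hu1
  set w : ℝ × ℝ → ℂ := fun q => -Complex.I * exp t₀ * dX u q + (b₀ * (q.2 - t₀) : ℝ) * u q with hw
  have hwc : Continuous w := by fun_prop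
  have hws : tsupport w ⊆ tsupport u := by
    refine closure_minimal ?_ (isClosed_tsupport _)
    intro q hq
    by_contra hn
    apply hq
    simp [hw, image_eq_zero_of_notMem_tsupport hn,
      image_eq_zero_of_notMem_tsupport fun hm => hn (tsupport_dX u hm)]
  have hwcs : HasCompactSupport w := hc.isCompact.of_isClosed_subset (isClosed_tsupport _) hws
  have hycs : HasCompactSupport (dY u) :=
    hc.isCompact.of_isClosed_subset (isClosed_tsupport _) (tsupport_dY u)
  have p1 := GG_parseval xl xr _ _ θ hx hdy hycs ((tsupport_dY u).trans hs)
  have p2 := GG_parseval xl xr _ _ θ hx hwc hwcs (hws.trans hs)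
  have p := p1.add p2
  have ew : ∀ η t, GG xl xr w η t = ((exp t₀ * η + b₀ * (t - t₀) : ℝ) : ℂ) * GG xl xr u η t := by
    intro η t
    have : GG xl xr w η t = GG xl xr (fun q => (-Complex.I * exp t₀) * dX u q +
        ((b₀ * (t - t₀) : ℝ) : ℂ) * u q) η t := rfl
    rw [this, GG_smul_add _ _ _ _ hdx hu0, GG_dx xl xr _ _ η t hu1 hs]
    push_cast
    linear_combination (-Complex.exp (t₀ : ℂ) * η * GG xl xr u η t) * Complex.I_sq
  convert p using 1
  · funext j
    rw [← integral_add
      (int_nsq1 (GG_cont xl xr _ hdy) (GG_cs xl xr _ hycs))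
      (int_nsq1 (GG_cont xl xr _ hwc) (GG_cs xl xr _ hwcs))]
    congr 1; ext t
    rw [(GG_deriv xl xr _ hu1 hc t).deriv, ew, norm_mul, Complex.norm_real, mul_pow,
      Real.norm_eq_abs, sq_abs]
  · rw [← mul_add]
    congr 1
    have k1 : Integrable (fun q => ‖dY u q‖ ^ 2) (volume : Measure (ℝ × ℝ)) :=
      int_nsq2 hdy hycs
    have k2 : Integrable (fun q => ‖w q‖ ^ 2) (volume : Measure (ℝ × ℝ)) :=
      int_nsq2 hwc hwcs
    have k3 : Integrable (fun q => ‖u q‖ ^ 2) (volume : Measure (ℝ × ℝ)) :=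
      int_nsq2 hu0 hc
    have e1 : ∀ q, Real.exp (2 * t₀) * ‖-Complex.I * dX u q - (Azero t₀ b₀ q : ℂ) * u q‖ ^ 2
        = ‖w q‖ ^ 2 := by
      intro q
      have : w q = (Real.exp t₀ : ℂ) * (-Complex.I * dX u q - (Azero t₀ b₀ q : ℂ) * u q) := by
        have h1 : (Real.exp t₀ : ℂ) * (Real.exp (-t₀) : ℂ) = 1 := by
          rw [← Complex.ofReal_mul, ← Real.exp_add]; simp
        simp only [hw, Azero]
        push_cast at h1 ⊢
        linear_combination (-(b₀ * (q.2 - t₀) * u q)) * h1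
      rw [this, norm_mul, mul_pow, Complex.norm_real, Real.norm_of_nonneg (exp_pos _).le,
        ← Real.exp_nat_mul]
      norm_num
    unfold qK0
    simp only [e1]
    rw [hK]
    have k12 : Integrable (fun q => ‖w q‖ ^ 2 + ‖dY u q‖ ^ 2) (volume.restrict
      (Set.Ioo xl xr ×ˢ Set.Ioo (t₀ - ε₀ / 2) (t₀ + ε₀ / 2))) := (k2.add k1).restrict
    rw [integral_add k12 (k3.restrict.const_mul _), integral_add k2.restrict k1.restrict,
      integral_const_mul]
    ring


lemma countJ (a ε₀ t₀ b μ : ℝ) (ha : 0 < a) (hε : 0 < ε₀) (hμ : 0 ≤ μ) (N : ℕ) :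
    ∃ J : Finset ℤ, (J.card : ℝ) ≤ N * (a * ε₀ ^ 2 * |b| / (2 * π)) + (√μ * (ε₀ * a) / π + 1) ∧
      ∀ j ∉ J, ∀ c : Fin N, ∀ t ∈ Set.Ioo (t₀ - ε₀ / 2) (t₀ + ε₀ / 2),
        μ ≤ (2 * π * j / (ε₀ * a) + b * (t - t₀ + c * ε₀)) ^ 2 := by
  have hA : 0 < ε₀ * a := by positivity
  have hpi := Real.pi_pos
  set s0 : ℝ := (N - 1) * ε₀ / 2 with hs0
  set y0 : ℝ := -(b * s0) * (ε₀ * a) / (2 * π) with hy0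
  set R : ℝ := √μ + |b| * N * ε₀ / 2 with hR
  set r : ℝ := R * (ε₀ * a) / (2 * π) with hr
  have hR0 : 0 ≤ R := by positivity
  have hr0 : 0 ≤ r := by positivity
  refine ⟨Finset.Icc ⌈y0 - r⌉ ⌊y0 + r⌋, ?_, ?_⟩
  · rw [Int.card_Icc]
    have h1 : (⌊y0 + r⌋ : ℝ) ≤ y0 + r := Int.floor_le _
    have h2 : y0 - r ≤ (⌈y0 - r⌉ : ℝ) := Int.le_ceil _
    have e : N * (a * ε₀ ^ 2 * |b| / (2 * π)) + (√μ * (ε₀ * a) / π + 1) = 2 * r + 1 := by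
      rw [hr, hR]; field_simp; ring
    rw [e]
    have h3 : (((⌊y0 + r⌋ + 1 - ⌈y0 - r⌉).toNat : ℤ) : ℝ) ≤ 2 * r + 1 := by
      rw [Int.toNat_eq_max]
      push_cast
      refine max_le ?_ (by linarith)
      linarith
    exact_mod_cast h3
  · intro j hj c t ht
    have hc0 : (0:ℝ) ≤ c := by positivity
    have hc1 : ((c:ℕ):ℝ) + 1 ≤ N := by exact_mod_cast c.2
    set s : ℝ := t - t₀ + c * ε₀ with hs
    have hss : |s - s0| ≤ N * ε₀ / 2 := by
      rw [abs_le, hs, hs0]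
      have := ht.1; have := ht.2
      constructor <;> nlinarith
    have hjr : r < |(j:ℝ) - y0| := by
      by_contra! hn
      rw [abs_le] at hn
      apply hj
      rw [Finset.mem_Icc, Int.ceil_le, Int.le_floor]
      constructor <;> linarith
    have e1 : 2 * π * j / (ε₀ * a) + b * s0 = ((j:ℝ) - y0) * (2 * π / (ε₀ * a)) := by
      rw [hy0]; field_simp; ring
    have h1 : R ≤ |2 * π * j / (ε₀ * a) + b * s0| := by
      rw [e1, abs_mul, abs_of_pos (by positivity : 0 < 2 * π / (ε₀ * a))]
      have : R = r * (2 * π / (ε₀ * a)) := by rw [hr]; field_simp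
      rw [this]
      exact mul_le_mul_of_nonneg_right hjr.le (by positivity)
    have h2 : |b * (s - s0)| ≤ |b| * (N * ε₀ / 2) := by
      rw [abs_mul]; exact mul_le_mul_of_nonneg_left hss (abs_nonneg _)
    have h3 : √μ ≤ |2 * π * j / (ε₀ * a) + b * s| := by
      have := abs_sub_abs_le_abs_sub (2 * π * j / (ε₀ * a) + b * s0) (-(b * (s - s0)))
      rw [abs_neg, show 2 * π * j / (ε₀ * a) + b * s0 - -(b * (s - s0)) =
        2 * π * j / (ε₀ * a) + b * s by ring] at this
      rw [hR] at h1
      linarith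
    rw [← Real.sq_sqrt hμ, ← sq_abs (2 * π * j / (ε₀ * a) + b * s)]
    exact pow_le_pow_left₀ (Real.sqrt_nonneg _) h3 2

lemma functional_lin (xl xr η : ℝ) (h : ℝ → ℝ) (hh : Continuous h) {u v : ℝ × ℝ → ℂ}
    (hu : Continuous u) (hv : Continuous v) (hcu : HasCompactSupport u) (hcv : HasCompactSupport v)
    (c d : ℂ) :
    ∫ t, GG xl xr (fun q => c * u q + d * v q) η t * (h t : ℂ) =
      c * (∫ t, GG xl xr u η t * (h t : ℂ)) + d * ∫ t, GG xl xr v η t * (h t : ℂ) := by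
  have i : ∀ w : ℝ × ℝ → ℂ, Continuous w → HasCompactSupport w →
      Integrable (fun t => GG xl xr w η t * (h t : ℂ)) := fun w hw hc => by
    have := GG_cont xl xr η hw
    exact (by fun_prop : Continuous fun t => GG xl xr w η t * (h t : ℂ)).integrable_of_hasCompactSupport
      (GG_cs xl xr η hc).mul_right
  rw [← integral_const_mul, ← integral_const_mul,
    ← integral_add ((i u hu hcu).const_mul c) ((i v hv hcv).const_mul d)]
  congr 1; ext t
  rw [GG_smul_add xl xr η t hu hv]; ring

lemma core (x₀ t₀ a ε₀ b₀ lam : ℝ) (ha : 0 < a) (hε : 0 < ε₀) (hb : b₀ ≠ 0) (M N : ℕ)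
    (hM : lam - 1 / 4 ≤ (2 * M + 1) * |b₀|)
    (V : Submodule ℂ (ℝ × ℝ → ℂ)) [FiniteDimensional ℂ V]
    (hV : ∀ u ∈ V, IsTestOn (Krect x₀ t₀ a ε₀) u)
    (hq : ∀ u ∈ V, u ≠ 0 → qK0 x₀ t₀ a ε₀ b₀ u < lam * ∫ p in Krect x₀ t₀ a ε₀, ‖u p‖ ^ 2)
    (J : Finset ℤ)
    (hJ : ∀ j ∉ J, ∀ c : Fin N, ∀ t ∈ Set.Ioo (t₀ - ε₀ / 2) (t₀ + ε₀ / 2),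
        (2 * M + 1) * |b₀| ≤ (2 * π * j / (ε₀ * a) + b₀ * (t - t₀ + c * ε₀)) ^ 2) :
    N * Module.finrank ℂ V ≤ J.card * M := by
  by_contra! hlt
  set μ : ℝ := (2 * M + 1) * |b₀| with hμ
  set xl : ℝ := x₀ - ε₀ * a * Real.exp t₀ / 2 with hxl
  set xr : ℝ := x₀ + ε₀ * a * Real.exp t₀ / 2 with hxr
  have hexp := Real.exp_pos t₀
  have hl : xr - xl = ε₀ * a * Real.exp t₀ := by rw [hxl, hxr]; ring
  have hlpos : 0 < xr - xl := by rw [hl]; positivity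
  have hK : Krect x₀ t₀ a ε₀ = Set.Ioo xl xr ×ˢ Set.Ioo (t₀ - ε₀ / 2) (t₀ + ε₀ / 2) := rfl
  have hT : t₀ - ε₀ / 2 < t₀ + ε₀ / 2 := by linarith
  have hL : (t₀ + ε₀ / 2) - (t₀ - ε₀ / 2) = ε₀ := by ring
  have hV1 : ∀ u ∈ V, ContDiff ℝ 1 u := fun u hu => (hV u hu).1.of_le (by exact_mod_cast le_top)
  have hV0 : ∀ u ∈ V, Continuous u := fun u hu => (hV1 u hu).continuous
  have hVc : ∀ u ∈ V, HasCompactSupport u := fun u hu => (hV u hu).2.1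
  set θ : Fin N → ℝ := fun c => -(b₀ * c * ε₀) / exp t₀ with hθ
  set η : ℤ → Fin N → ℝ := fun j c => 2 * π * j / (xr - xl) - θ c with hη
  have pj : ∀ (j : ℤ) (c : Fin N) (t : ℝ), exp t₀ * η j c + b₀ * (t - t₀) =
      (2 * π * j / (ε₀ * a) - b₀ * t₀) + b₀ * (t + c * ε₀) := by
    intro j c t
    simp only [hη, hθ, hl]
    field_simp
    ring
  have gl := fun j : ℤ => glue (2 * π * j / (ε₀ * a) - b₀ * t₀) b₀ hb M _ _ hT
  rw [hL] at gl
  choose h hh H using gl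
  let Φ0 : (Fin N → V) → (J × Fin M → ℂ) := fun v jk =>
    ∑ c : Fin N, ∫ t, GG xl xr (v c) (η jk.1 c) t * (h jk.1 jk.2 (t + (c:ℝ) * ε₀) : ℂ)
  have hΦ : IsLinearMap ℂ Φ0 := by
    constructor
    · intro v w
      ext jk
      simp only [Φ0, Pi.add_apply]
      rw [← Finset.sum_add_distrib]
      refine Finset.sum_congr rfl fun c _ => ?_
      have := functional_lin xl xr (η jk.1 c) (fun t => h jk.1 jk.2 (t + (c:ℝ) * ε₀))
        (by have := hh jk.1 jk.2; fun_prop) (hV0 _ (v c).2) (hV0 _ (w c).2) (hVc _ (v c).2)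
        (hVc _ (w c).2) 1 1
      simp only [one_mul] at this
      exact this
    · intro r v
      ext jk
      simp only [Φ0, Pi.smul_apply, smul_eq_mul]
      rw [Finset.mul_sum]
      refine Finset.sum_congr rfl fun c _ => ?_
      have := functional_lin xl xr (η jk.1 c) (fun t => h jk.1 jk.2 (t + (c:ℝ) * ε₀))
        (by have := hh jk.1 jk.2; fun_prop) (hV0 _ (v c).2) (hV0 _ (v c).2) (hVc _ (v c).2)
        (hVc _ (v c).2) r 0
      simp only [zero_mul, add_zero] at this
      exact this
  let Φ : (Fin N → V) →ₗ[ℂ] (J × Fin M → ℂ) := hΦ.mk' Φ0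
  have hker : LinearMap.ker Φ ≠ ⊥ := by
    apply LinearMap.ker_ne_bot_of_finrank_lt
    rw [Module.finrank_fintype_fun_eq_card, Module.finrank_pi_fintype]
    simpa using hlt
  obtain ⟨v, hv, hv0⟩ := (Submodule.ne_bot_iff _).1 hker
  have hv' : ∀ (j : ℤ) (_ : j ∈ J) (k : Fin M),
      ∑ c : Fin N, ∫ t, GG xl xr (v c) (η j c) t * (h j k (t + (c:ℝ) * ε₀) : ℂ) = 0 := by
    intro j hj k
    have : Φ0 v = 0 := hv
    exact congrFun this (⟨j, hj⟩, k)
  have gC1 : ∀ j c, ContDiff ℝ 1 (GG xl xr (v c) (η j c)) := fun j c =>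
    GG_C1 xl xr _ (hV1 _ (v c).2) (hVc _ (v c).2)
  have gcs : ∀ j c, HasCompactSupport (GG xl xr (v c) (η j c)) := fun j c =>
    GG_cs xl xr _ (hVc _ (v c).2)
  have gts : ∀ j c, tsupport (GG xl xr (v c) (η j c)) ⊆ Set.Ioo (t₀ - ε₀ / 2) (t₀ + ε₀ / 2) := by
    intro j c t ht
    obtain ⟨q, hq1, rfl⟩ := GG_tsupport xl xr _ (hVc _ (v c).2) ht
    exact ((hV _ (v c).2).2.2 hq1).2
  have ineq : ∀ j : ℤ, μ * ∑ c, ∫ t, ‖GG xl xr (v c) (η j c) t‖ ^ 2 ≤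
      ∑ c, ∫ t, (‖deriv (GG xl xr (v c) (η j c)) t‖ ^ 2 +
        (exp t₀ * η j c + b₀ * (t - t₀)) ^ 2 * ‖GG xl xr (v c) (η j c) t‖ ^ 2) := by
    intro j
    simp only [pj]
    by_cases hj : j ∈ J
    · exact H j N (fun c => GG xl xr (v c) (η j c)) (gC1 j) (gcs j) (gts j) (hv' j hj)
    · rw [Finset.mul_sum]
      refine Finset.sum_le_sum fun c _ => ?_
      have g0 := (gC1 j c).continuous
      have g1 := (gC1 j c).continuous_deriv le_rfl
      rw [← integral_const_mul]
      have i1 := int_nsq1 g0 (gcs j c)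
      have i2 := int_nsq1 g1 (gcs j c).deriv
      have i3 : Integrable (fun t => (2 * π * j / (ε₀ * a) - b₀ * t₀ + b₀ * (t + c * ε₀)) ^ 2 *
          ‖GG xl xr (v c) (η j c) t‖ ^ 2) := by
        have : Continuous fun t => (2 * π * j / (ε₀ * a) - b₀ * t₀ + b₀ * (t + c * ε₀)) ^ 2 *
          ‖GG xl xr (v c) (η j c) t‖ ^ 2 := by fun_prop
        refine this.integrable_of_hasCompactSupport ?_
        refine HasCompactSupport.of_support_subset_isCompact (gcs j c).isCompact ?_
        intro t ht
        by_contra hn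
        exact ht (by simp [image_eq_zero_of_notMem_tsupport hn])
      refine integral_mono (i1.const_mul μ) (i2.add i3) fun t => ?_
      by_cases ht : t ∈ Set.Ioo (t₀ - ε₀ / 2) (t₀ + ε₀ / 2)
      · have h1 := hJ j hj c t ht
        have e : 2 * π * j / (ε₀ * a) - b₀ * t₀ + b₀ * (t + c * ε₀) =
          2 * π * j / (ε₀ * a) + b₀ * (t - t₀ + c * ε₀) := by ring
        simp only [Pi.add_apply]
        rw [e]
        have := mul_le_mul_of_nonneg_right h1 (sq_nonneg ‖GG xl xr (v c) (η j c) t‖)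
        have := sq_nonneg ‖deriv (GG xl xr (v c) (η j c)) t‖
        linarith
      · have : GG xl xr (v c) (η j c) t = 0 :=
          image_eq_zero_of_notMem_tsupport fun hm => ht (gts j c hm)
        simp only [Pi.add_apply, this]
        simp
  set S : Fin N → ℝ := fun c => ∫ q in Krect x₀ t₀ a ε₀, ‖(v c : ℝ × ℝ → ℂ) q‖ ^ 2 with hS
  have s1 : HasSum (fun j : ℤ => μ * ∑ c, ∫ t, ‖GG xl xr (v c) (η j c) t‖ ^ 2)
      (μ * ∑ c, (xr - xl) * S c) := by
    refine HasSum.mul_left μ (hasSum_sum fun c _ => ?_)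
    exact GG_parseval xl xr _ _ (θ c) (by linarith) (hV0 _ (v c).2) (hVc _ (v c).2)
      (hV _ (v c).2).2.2
  have s2 : HasSum (fun j : ℤ => ∑ c, ∫ t, (‖deriv (GG xl xr (v c) (η j c)) t‖ ^ 2 +
        (exp t₀ * η j c + b₀ * (t - t₀)) ^ 2 * ‖GG xl xr (v c) (η j c) t‖ ^ 2))
      (∑ c, (xr - xl) * (qK0 x₀ t₀ a ε₀ b₀ (v c) - 1 / 4 * S c)) :=
    hasSum_sum fun c _ => energy x₀ t₀ a ε₀ b₀ (θ c) ha hε (hV _ (v c).2) xl xr hxl hxr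
  have fin := hasSum_le ineq s1 s2
  rw [← Finset.mul_sum, ← Finset.mul_sum, ← mul_assoc, mul_comm μ, mul_assoc,
    mul_le_mul_iff_right₀ hlpos, Finset.sum_sub_distrib, ← Finset.mul_sum] at fin
  have hS0 : 0 ≤ ∑ c, S c := Finset.sum_nonneg fun c _ => integral_nonneg fun q => by positivity
  have lt : ∑ c, qK0 x₀ t₀ a ε₀ b₀ (v c) < ∑ c, lam * S c := by
    have hex : ∃ c, v c ≠ 0 := by
      by_contra! hn
      exact hv0 (funext hn)
    obtain ⟨c, hc⟩ := hex
    refine Finset.sum_lt_sum (fun d _ => ?_) ⟨c, Finset.mem_univ _, ?_⟩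
    · by_cases hd : (v d : ℝ × ℝ → ℂ) = 0
      · have hd0 : dX (0 : ℝ × ℝ → ℂ) = 0 := by ext q; simp [dX]
        have hd1 : dY (0 : ℝ × ℝ → ℂ) = 0 := by ext q; simp [dY]
        simp only [hS, hd, qK0, hd0, hd1]
        simp
      · exact (hq _ (v d).2 hd).le
    · exact hq _ (v c).2 (fun h0 => hc (Subtype.ext h0))
  rw [← Finset.mul_sum] at lt
  have := mul_le_mul_of_nonneg_right hM hS0
  linarith
/-- upper bound for the counting function of `q^{A⁰,0}_K`. -/
theorem counting_upper_bound_rectangle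
    (a₀ a ε₀ x₀ t₀ b₀ : ℝ) (ha₀ : 1 < a₀) (ha : 1 / a₀ < a) (ha' : a ≤ a₀)
    (hε₀ : 0 < ε₀) (hε₀' : ε₀ < 1) (hb₀ : b₀ ≠ 0) (lam : ℝ) :
    (NK0 x₀ t₀ a ε₀ b₀ lam : ℝ) ≤
      (a * ε₀ ^ 2 * Real.exp t₀) * |b₀| / (2 * π * Real.exp t₀) *
        ∑' k : ℕ, heav (lam - 1/4 - (2 * (k : ℝ) + 1) * |b₀|) := by
  have ha₀pos : 0 < a₀ := by linarith
  have hapos : 0 < a := lt_trans (by positivity) ha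
  have hβ : 0 < |b₀| := abs_pos.2 hb₀
  have hpi := Real.pi_pos
  set M : ℕ := ⌈((lam - 1/4) / |b₀| - 1) / 2⌉₊ with hMdef
  have hMlt : ∀ k : ℕ, k < M ↔ 0 < lam - 1/4 - (2 * (k : ℝ) + 1) * |b₀| := by
    intro k
    rw [hMdef, Nat.lt_ceil, lt_div_iff₀ (by norm_num), lt_sub_iff_add_lt, lt_div_iff₀ hβ, sub_pos,
      mul_comm (k : ℝ) 2]
  have hM : lam - 1/4 ≤ (2 * M + 1) * |b₀| := by
    have := (hMlt M).not.1 (lt_irrefl M)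
    linarith
  have hts : ∑' k : ℕ, heav (lam - 1/4 - (2 * (k : ℝ) + 1) * |b₀|) = M := by
    rw [tsum_eq_sum (s := Finset.range M)]
    · rw [Finset.sum_congr rfl (g := fun _ => (1:ℝ))]
      · simp
      · intro k hk
        rw [Finset.mem_range, hMlt] at hk
        simp only [heav, if_pos hk]
    · intro k hk
      rw [Finset.mem_range, hMlt] at hk
      simp only [heav, if_neg hk]
  rw [hts]
  have hC : (a * ε₀ ^ 2 * Real.exp t₀) * |b₀| / (2 * π * Real.exp t₀) = a * ε₀ ^ 2 * |b₀| / (2 * π) := by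
    have := Real.exp_pos t₀
    field_simp
  rw [hC]
  set D : ℝ := a * ε₀ ^ 2 * |b₀| / (2 * π) with hD
  have hD0 : 0 ≤ D := by positivity
  set B : ℝ := D * M with hB
  have hB0 : 0 ≤ B := by positivity
  have main : ∀ n ∈ {n : ℕ | ∃ V : Submodule ℂ (ℝ × ℝ → ℂ),
      (V : Set (ℝ × ℝ → ℂ)) ⊆ {w | IsTestOn (Krect x₀ t₀ a ε₀) w} ∧
      Module.finrank ℂ V = n ∧ ∀ u ∈ V, u ≠ 0 → qK0 x₀ t₀ a ε₀ b₀ u <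
        lam * (fun w : ℝ × ℝ → ℂ => ∫ p in Krect x₀ t₀ a ε₀, ‖w p‖ ^ 2) u}, (n : ℝ) ≤ B := by
    rintro n ⟨V, hV, hn, hq⟩
    rcases Nat.eq_zero_or_pos n with h0 | hpos
    · rw [h0]; simpa using hB0
    have : FiniteDimensional ℂ V := Module.finite_of_finrank_pos (by omega)
    set E : ℝ := (√((2 * M + 1) * |b₀|) * (ε₀ * a) / π + 1) * M with hE
    have hN : ∀ N : ℕ, (N : ℝ) * n ≤ N * B + E := by
      intro N
      obtain ⟨J, hJ1, hJ2⟩ := countJ a ε₀ t₀ b₀ ((2 * M + 1) * |b₀|) hapos hε₀ (by positivity) N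
      have := core x₀ t₀ a ε₀ b₀ lam hapos hε₀ hb₀ M N hM V hV hq J hJ2
      rw [hn] at this
      have h1 : (N : ℝ) * n ≤ J.card * M := by exact_mod_cast this
      have h2 := mul_le_mul_of_nonneg_right hJ1 (Nat.cast_nonneg (α := ℝ) M)
      rw [hE, hB]
      linarith
    by_contra! hlt
    obtain ⟨N, hN'⟩ := exists_nat_gt (E / (n - B))
    rw [div_lt_iff₀ (by linarith)] at hN'
    have := hN N
    linarith
  unfold NK0 NN
  rcases Set.eq_empty_or_nonempty {n : ℕ | ∃ V : Submodule ℂ (ℝ × ℝ → ℂ),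
      (V : Set (ℝ × ℝ → ℂ)) ⊆ {w | IsTestOn (Krect x₀ t₀ a ε₀) w} ∧
      Module.finrank ℂ V = n ∧ ∀ u ∈ V, u ≠ 0 → qK0 x₀ t₀ a ε₀ b₀ u <
        lam * (fun w : ℝ × ℝ → ℂ => ∫ p in Krect x₀ t₀ a ε₀, ‖w p‖ ^ 2) u} with he | hne
  · rw [he]; simpa using hB0
  · exact main _ (Nat.sSup_mem hne ⟨⌊B⌋₊, fun n hn => Nat.le_floor (main n hn)⟩)
end
end
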